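/- Fix n > 0. Under a fixed computable injective encoding of HyperLTL sentences as natural numbers, the set of codes of HyperLTL sentences that are equivalent to some Σ_n-sentence is Π¹₁-complete: it is the complement of a Σ¹₁ set, and the complement of every Σ¹₁ set many-one reduces to it via a total computable function. -/

import Mathlib

/-! ### HyperLTL: syntax and semantics -/

/-- A trace over a set `AP` of atomic propositions. -/
abbrev Trace (AP : Type) : Type := ℕ → Set AP

/-- The suffix of a trace from position `j` onwards. -/
def Trace.shift {AP : Type} (t : Trace AP) (j : ℕ) : Trace AP := fun i => t (i + j)

/-- Quantifier-free HyperLTL formulas; trace variables are natural numbers. -/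
inductive QF (AP : Type) : Type where
  | atom : AP → ℕ → QF AP
  | neg  : QF AP → QF AP
  | disj : QF AP → QF AP → QF AP
  | next : QF AP → QF AP
  | untl : QF AP → QF AP → QF AP

/-- HyperLTL formulas: a block of trace quantifiers followed by a
quantifier-free formula (HyperLTL formulas are in prenex normal form). -/
inductive HFormula (AP : Type) : Type where
  | ex  : ℕ → HFormula AP → HFormula AP
  | all : ℕ → HFormula AP → HFormula AP
  | qf  : QF AP → HFormula AP

/-- The simultaneous shift of a trace assignment. -/
def shiftAsg {AP : Type} (As : ℕ → Trace AP) (j : ℕ) : ℕ → Trace AP :=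
  fun x => Trace.shift (As x) j

/-- Semantics of quantifier-free HyperLTL formulas w.r.t. a trace assignment. -/
def QF.sat {AP : Type} : QF AP → (ℕ → Trace AP) → Prop
  | .atom a x, As => a ∈ As x 0
  | .neg ψ, As => ¬ ψ.sat As
  | .disj ψ₁ ψ₂, As => ψ₁.sat As ∨ ψ₂.sat As
  | .next ψ, As => ψ.sat (shiftAsg As 1)
  | .untl ψ₁ ψ₂, As => ∃ j, ψ₂.sat (shiftAsg As j) ∧ ∀ j' < j, ψ₁.sat (shiftAsg As j')

/-- Semantics of HyperLTL formulas w.r.t. a set of traces and a trace assignment. -/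
def HFormula.sat {AP : Type} : HFormula AP → Set (Trace AP) → (ℕ → Trace AP) → Prop
  | .ex x φ, T, As => ∃ t ∈ T, φ.sat T (Function.update As x t)
  | .all x φ, T, As => ∀ t ∈ T, φ.sat T (Function.update As x t)
  | .qf ψ, _, As => ψ.sat As

def QF.freeVars {AP : Type} : QF AP → Set ℕ
  | .atom _ x => {x}
  | .neg ψ => ψ.freeVars
  | .disj ψ₁ ψ₂ => ψ₁.freeVars ∪ ψ₂.freeVars
  | .next ψ => ψ.freeVars
  | .untl ψ₁ ψ₂ => ψ₁.freeVars ∪ ψ₂.freeVars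

def HFormula.freeVars {AP : Type} : HFormula AP → Set ℕ
  | .ex x φ => φ.freeVars \ {x}
  | .all x φ => φ.freeVars \ {x}
  | .qf ψ => ψ.freeVars

/-- A sentence is a formula without free variables. -/
def HFormula.IsSentence {AP : Type} (φ : HFormula AP) : Prop := φ.freeVars = ∅

/-- `T` is a model of `φ` (for sentences the initial assignment is irrelevant). -/
def HModels {AP : Type} (T : Set (Trace AP)) (φ : HFormula AP) : Prop :=
  φ.sat T (fun _ _ => ∅)

/-- A HyperLTL sentence is satisfiable if it has a model. -/
def HSatisfiable {AP : Type} (φ : HFormula AP) : Prop := ∃ T, HModels T φ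

/-! ### A fixed computable injective encoding of HyperLTL formulas -/

def QF.codeWith {AP : Type} (e : AP → ℕ) : QF AP → ℕ
  | .atom a x => Nat.pair 0 (Nat.pair (e a) x)
  | .neg ψ => Nat.pair 1 (ψ.codeWith e)
  | .disj ψ₁ ψ₂ => Nat.pair 2 (Nat.pair (ψ₁.codeWith e) (ψ₂.codeWith e))
  | .next ψ => Nat.pair 3 (ψ.codeWith e)
  | .untl ψ₁ ψ₂ => Nat.pair 4 (Nat.pair (ψ₁.codeWith e) (ψ₂.codeWith e))

def HFormula.codeWith {AP : Type} (e : AP → ℕ) : HFormula AP → ℕ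
  | .ex x φ => Nat.pair 0 (Nat.pair x (φ.codeWith e))
  | .all x φ => Nat.pair 1 (Nat.pair x (φ.codeWith e))
  | .qf ψ => Nat.pair 2 (ψ.codeWith e)

/-! ### Arithmetic formulas and Σ¹₁ sets -/

/-- Terms of arithmetic (signature 0,1,+,·) with number variables and
applications of (free) type-1 function variables. -/
inductive ATerm : Type where
  | var : ℕ → ATerm
  | zero : ATerm
  | one : ATerm
  | add : ATerm → ATerm → ATerm
  | mul : ATerm → ATerm → ATerm
  | app : ℕ → ATerm → ATerm

def ATerm.eval : ATerm → (ℕ → ℕ) → (ℕ → ℕ → ℕ) → ℕ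
  | .var x, v, _ => v x
  | .zero, _, _ => 0
  | .one, _, _ => 1
  | .add s t, v, F => s.eval v F + t.eval v F
  | .mul s t, v, F => s.eval v F * t.eval v F
  | .app f t, v, F => F f (t.eval v F)

/-- Formulas of arithmetic with arbitrary quantification over natural numbers
(type-0 objects); type-1 function variables occur free, via `ATerm.app`. -/
inductive AForm : Type where
  | eq : ATerm → ATerm → AForm
  | lt : ATerm → ATerm → AForm
  | neg : AForm → AForm
  | disj : AForm → AForm → AForm
  | exN : ℕ → AForm → AForm
  | allN : ℕ → AForm → AForm

def AForm.sat : AForm → (ℕ → ℕ) → (ℕ → ℕ → ℕ) → Prop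
  | .eq s t, v, F => s.eval v F = t.eval v F
  | .lt s t, v, F => s.eval v F < t.eval v F
  | .neg φ, v, F => ¬ φ.sat v F
  | .disj φ ψ, v, F => φ.sat v F ∨ ψ.sat v F
  | .exN x φ, v, F => ∃ n : ℕ, φ.sat (Function.update v x n) F
  | .allN x φ, v, F => ∀ n : ℕ, φ.sat (Function.update v x n) F

/-- A set `N ⊆ ℕ` is Σ¹₁ if it is defined by existential quantification over
type-1 objects (functions ℕ → ℕ) followed by an arithmetic formula with
arbitrary quantification over natural numbers. -/
def Sigma11 (N : Set ℕ) : Prop :=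
  ∃ ψ : AForm, ∀ x : ℕ, x ∈ N ↔ ∃ F : ℕ → ℕ → ℕ, ψ.sat (fun _ => x) F

/-- `A` many-one reduces to `B` via a total computable function. -/
def ManyOneRed (A B : Set ℕ) : Prop :=
  ∃ f : ℕ → ℕ, Computable f ∧ ∀ x, x ∈ A ↔ f x ∈ B

/-! ### The quantifier alternation hierarchy -/

/-- The quantifier prefix of a (prenex) HyperLTL formula: `true` stands for an
existential quantifier, `false` for a universal one. -/
def HFormula.prefixList {AP : Type} : HFormula AP → List Bool
  | .ex _ φ => true :: φ.prefixList
  | .all _ φ => false :: φ.prefixList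
  | .qf _ => []

/-- `AltPrefix n b l` holds if `l` consists of at most `n` alternating blocks of
quantifiers, the first block consisting of quantifiers of kind `b`
(blocks may be empty). -/
def AltPrefix : ℕ → Bool → List Bool → Prop
  | 0, _, l => l = []
  | n+1, b, l => ∃ l₁ l₂, l = l₁ ++ l₂ ∧ (∀ c ∈ l₁, c = b) ∧ AltPrefix n (!b) l₂

/-- A Σₙ-prefix: at most `n` alternating blocks, beginning with an existential block. -/
def SigPrefix (n : ℕ) (l : List Bool) : Prop := AltPrefix n true l

/-- A Σₙ-sentence of HyperLTL. -/
def IsSigmaSentence {AP : Type} (n : ℕ) (φ : HFormula AP) : Prop :=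
  φ.IsSentence ∧ SigPrefix n φ.prefixList

/-- The set of codes of HyperLTL sentences that are equivalent to some
Σ_n-sentence. -/
def EquivSigmaCodes (n : ℕ) : Set ℕ :=
  {c : ℕ | ∃ φ : HFormula ℕ, φ.IsSentence ∧ HFormula.codeWith id φ = c ∧
    ∃ ψ : HFormula ℕ, IsSigmaSentence n ψ ∧ ∀ T, HModels T φ ↔ HModels T ψ}

/-!
*Membership of the complement in Σ¹₁.* By the Löwenheim–Skolem theorem for HyperLTL, two
inequivalent sentences are told apart by a countable set of traces. So a sentence with code `c` is
not equivalent to any Σ_n-sentence iff there is a family of countable sets of traces, indexed by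
codes `d`, such that the set number `d` tells `c` apart from `d` whenever `d` codes a
Σ_n-sentence. Such a family, together with its satisfaction relations, is stored in finitely many
functions `ℕ → ℕ`; that these relations are the right ones is an arithmetical condition, because
they are determined by recursion equations.

*Hardness.* A HyperLTL sentence can force its models to code the tables of `+`, `·` and one more
function `G`, a row `(x, y, z)` being coded by a trace with one mark per entry, at the position
given by that entry. It can then express every arithmetical property of `G`. Given `x` and an
arithmetical formula defining a Σ¹₁ set `N`, take a sentence saying that `G` stores functions `F`
witnessing `x ∈ N`, together with a set `M` of histories of the `n`-round evaluation game on the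
rows of the table, and that the existential player loses the game with winning set `M`. If
`x ∉ N`, this sentence is unsatisfiable, hence equivalent to a Σ_1-sentence. If `x ∈ N`, it is
equivalent to no Σ_n-sentence `χ`: let `M` consist of the plays of triples `(x, y, z)` whose
traces satisfy the quantifier-free part of `χ`. This does not refer to `G`, so some `G` stores `F`
and `M`, and the existential player wins on the table of that `G` iff `χ` holds there.
-/

/-! ### HyperLTL formulas in prenex form -/

/-- Quantification over the elements of `T`: existential for `b = true`, universal for `b = false`,
the convention of `HFormula.prefixList`. -/
def BoundedQuant {α : Type*} (b : Bool) (T : Set α) (P : α → Prop) : Prop :=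
  if b then ∃ t ∈ T, P t else ∀ t ∈ T, P t

namespace BoundedQuant

variable {α β : Type*} {T : Set α} {P P' : α → Prop} {b : Bool}

theorem congr (h : ∀ t ∈ T, (P t ↔ P' t)) : BoundedQuant b T P ↔ BoundedQuant b T P' := by
  cases b
  · exact forall₂_congr h
  · exact exists_congr fun t => and_congr_right (h t)

theorem not_iff : BoundedQuant (!b) T (fun t => ¬ P t) ↔ ¬ BoundedQuant b T P := by
  cases b <;> simp [BoundedQuant]

theorem and_left_iff (hT : T.Nonempty) (Q : Prop) :
    BoundedQuant b T (fun t => Q ∧ P t) ↔ Q ∧ BoundedQuant b T P := by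
  obtain ⟨t, ht⟩ := hT
  cases b
  · exact ⟨fun h => ⟨(h t ht).1, fun s hs => (h s hs).2⟩, fun h s hs => ⟨h.1, h.2 s hs⟩⟩
  · simp [BoundedQuant, and_left_comm]

theorem and_right_iff (hT : T.Nonempty) (Q : Prop) :
    BoundedQuant b T (fun t => P t ∧ Q) ↔ BoundedQuant b T P ∧ Q := by
  simp only [and_comm (b := Q), and_left_iff hT]

theorem const_iff (hT : T.Nonempty) (Q : Prop) : BoundedQuant b T (fun _ => Q) ↔ Q := by
  obtain ⟨t, ht⟩ := hT
  cases b
  · exact ⟨fun h => h t ht, fun h _ _ => h⟩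
  · exact ⟨fun ⟨_, _, h⟩ => h, fun h => ⟨t, ht, h⟩⟩

theorem image_iff (f : β → α) (S : Set β) :
    BoundedQuant b (f '' S) P ↔ BoundedQuant b S fun s => P (f s) := by
  cases b
  · exact Set.forall_mem_image
  · exact Set.exists_mem_image

end BoundedQuant

@[simp] theorem shiftAsg_shiftAsg {AP : Type} (As : ℕ → Trace AP) (i j : ℕ) :
    shiftAsg (shiftAsg As i) j = shiftAsg As (i + j) := by
  funext x k
  exact congrArg (As x) (by omega)

theorem shiftAsg_apply {AP : Type} (As : ℕ → Trace AP) (j x i : ℕ) :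
    shiftAsg As j x i = As x (i + j) := rfl

namespace QF

variable {AP : Type}

/-- Conjunction, as the usual abbreviation. -/
def conj (ψ χ : QF AP) : QF AP := .neg (.disj (.neg ψ) (.neg χ))

/-- The temporal operator `F` ("eventually"), with a tautology on the left of `U`. -/
def eventually (ψ : QF AP) : QF AP := .untl (.disj ψ (.neg ψ)) ψ

/-- Renaming of trace variables. -/
def rename (ρ : ℕ → ℕ) : QF AP → QF AP
  | .atom a x => .atom a (ρ x)
  | .neg ψ => .neg (ψ.rename ρ)
  | .disj ψ χ => .disj (ψ.rename ρ) (χ.rename ρ)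
  | .next ψ => .next (ψ.rename ρ)
  | .untl ψ χ => .untl (ψ.rename ρ) (χ.rename ρ)

@[simp] theorem sat_conj (ψ χ : QF AP) (As : ℕ → Trace AP) :
    (conj ψ χ).sat As ↔ ψ.sat As ∧ χ.sat As := by
  simp only [conj, sat, not_or, not_not]

@[simp] theorem sat_eventually (ψ : QF AP) (As : ℕ → Trace AP) :
    (eventually ψ).sat As ↔ ∃ j, ψ.sat (shiftAsg As j) := by
  simp only [eventually, sat, em, implies_true, and_true]

theorem sat_iterate_next (ψ : QF AP) (n : ℕ) (As : ℕ → Trace AP) :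
    (QF.next^[n] ψ).sat As ↔ ψ.sat (shiftAsg As n) := by
  induction n generalizing As with
  | zero => rfl
  | succ n ih => rw [Function.iterate_succ_apply', sat, ih, shiftAsg_shiftAsg, Nat.add_comm]

theorem freeVars_iterate_next (ψ : QF AP) (n : ℕ) : (QF.next^[n] ψ).freeVars = ψ.freeVars := by
  induction n with
  | zero => rfl
  | succ n ih => rw [Function.iterate_succ_apply', freeVars, ih]

theorem sat_rename (ρ : ℕ → ℕ) (ψ : QF AP) (As : ℕ → Trace AP) :
    (ψ.rename ρ).sat As ↔ ψ.sat (As ∘ ρ) := by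
  induction ψ generalizing As with
  | atom _ _ => rfl
  | neg _ ih => exact not_congr (ih As)
  | disj _ _ ihψ ihχ => exact or_congr (ihψ As) (ihχ As)
  | next _ ih => exact ih _
  | untl _ _ ihψ ihχ =>
    exact exists_congr fun j => and_congr (ihχ _) (forall₂_congr fun i _ => ihψ _)

theorem freeVars_rename_subset (ρ : ℕ → ℕ) (ψ : QF AP) :
    (ψ.rename ρ).freeVars ⊆ Set.range ρ := by
  induction ψ with
  | atom _ x => exact Set.singleton_subset_iff.2 ⟨x, rfl⟩
  | neg _ ih => exact ih
  | disj _ _ ihψ ihχ => exact Set.union_subset ihψ ihχ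
  | next _ ih => exact ih
  | untl _ _ ihψ ihχ => exact Set.union_subset ihψ ihχ

theorem sat_congr {ψ : QF AP} {As Bs : ℕ → Trace AP} (h : ∀ x ∈ ψ.freeVars, As x = Bs x) :
    ψ.sat As ↔ ψ.sat Bs := by
  have shift {χ : QF AP} {As Bs : ℕ → Trace AP} (h : ∀ x ∈ χ.freeVars, As x = Bs x) (j : ℕ) :
      ∀ x ∈ χ.freeVars, shiftAsg As j x = shiftAsg Bs j x :=
    fun x hx => congrArg (Trace.shift · j) (h x hx)
  induction ψ generalizing As Bs with
  | atom _ x => simp only [sat, h x rfl]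
  | neg _ ih => exact not_congr (ih h)
  | disj _ _ ihψ ihχ =>
    exact or_congr (ihψ fun x hx => h x (.inl hx)) (ihχ fun x hx => h x (.inr hx))
  | next _ ih => exact ih (shift h 1)
  | untl _ _ ihψ ihχ =>
    exact exists_congr fun j => and_congr (ihχ (shift (fun x hx => h x (.inr hx)) j))
      (forall₂_congr fun i _ => ihψ (shift (fun x hx => h x (.inl hx)) i))

end QF

namespace HFormula

variable {AP : Type}

/-- A single trace quantifier, existential for `b = true` and universal for `b = false`. -/
def quant (b : Bool) (x : ℕ) (φ : HFormula AP) : HFormula AP := if b then .ex x φ else .all x φ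

theorem sat_quant (b : Bool) (x : ℕ) (φ : HFormula AP) (T : Set (Trace AP)) (As : ℕ → Trace AP) :
    (quant b x φ).sat T As ↔ BoundedQuant b T fun t => φ.sat T (Function.update As x t) := by
  cases b <;> rfl

theorem freeVars_quant (b : Bool) (x : ℕ) (φ : HFormula AP) :
    (quant b x φ).freeVars = φ.freeVars \ {x} := by
  cases b <;> rfl

/-- The prenex formula with quantifier prefix `l`, binding the variables `k, k + 1, …` in order. -/
def prenex : List Bool → ℕ → QF AP → HFormula AP
  | [], _, θ => .qf θ
  | b :: l, k, θ => quant b k (prenex l (k + 1) θ)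

theorem lt_of_mem_freeVars_prenex {l : List Bool} {k : ℕ} {θ : QF AP}
    (hθ : ∀ x ∈ θ.freeVars, x < k + l.length) : ∀ x ∈ (prenex l k θ).freeVars, x < k := by
  induction l generalizing k with
  | nil => exact hθ
  | cons b l ih =>
    intro x hx
    rw [prenex, freeVars_quant] at hx
    have := ih (k := k + 1) (fun y hy => by have := hθ y hy; rw [List.length_cons] at this; omega)
      x hx.1
    exact lt_of_le_of_ne (Nat.lt_succ_iff.1 this) hx.2

theorem sat_prenex_neg (l : List Bool) (k : ℕ) (θ : QF AP) (T : Set (Trace AP))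
    (As : ℕ → Trace AP) :
    (prenex (l.map not) k θ.neg).sat T As ↔ ¬ (prenex l k θ).sat T As := by
  induction l generalizing k As with
  | nil => rfl
  | cons b l ih =>
    simp only [List.map_cons, prenex, sat_quant, ih, BoundedQuant.not_iff]

theorem sat_prenex_conj {T : Set (Trace AP)} (hT : T.Nonempty) {k : ℕ} {θ₀ : QF AP}
    (h₀ : ∀ x ∈ θ₀.freeVars, x < k) (l : List Bool) (θ : QF AP) (As : ℕ → Trace AP) :
    (prenex l k (θ₀.conj θ)).sat T As ↔ θ₀.sat As ∧ (prenex l k θ).sat T As := by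
  induction l generalizing k As with
  | nil => exact QF.sat_conj _ _ _
  | cons b l ih =>
    have h₀_update (t : Trace AP) : θ₀.sat (Function.update As k t) ↔ θ₀.sat As :=
      QF.sat_congr fun x hx => Function.update_of_ne (h₀ x hx).ne _ _
    simp only [prenex, sat_quant, ih fun x hx => (h₀ x hx).trans k.lt_succ_self, h₀_update,
      BoundedQuant.and_left_iff hT]

theorem sat_prenex_append_conj {T : Set (Trace AP)} (hT : T.Nonempty) {l₁ l₂ : List Bool} {k : ℕ}
    {θ₁ θ₂ : QF AP} (h₁ : ∀ x ∈ θ₁.freeVars, x < k + l₁.length) {As : ℕ → Trace AP} {Q : Prop}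
    (hQ : ∀ Bs, (∀ x < k, Bs x = As x) → ((prenex l₂ (k + l₁.length) θ₂).sat T Bs ↔ Q)) :
    (prenex (l₁ ++ l₂) k (θ₁.conj θ₂)).sat T As ↔ (prenex l₁ k θ₁).sat T As ∧ Q := by
  induction l₁ generalizing k As with
  | nil =>
    exact (sat_prenex_conj hT h₁ l₂ θ₂ As).trans (and_congr_right fun _ => hQ As fun _ _ => rfl)
  | cons b l₁ ih =>
    have shift : k + (b :: l₁).length = k + 1 + l₁.length := by rw [List.length_cons]; omega
    rw [shift] at h₁ hQ
    have step (t : Trace AP) : (prenex (l₁ ++ l₂) (k + 1) (θ₁.conj θ₂)).sat T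
        (Function.update As k t) ↔
          (prenex l₁ (k + 1) θ₁).sat T (Function.update As k t) ∧ Q :=
      ih h₁ fun Bs hBs => hQ Bs fun x hx =>
        (hBs x (hx.trans k.lt_succ_self)).trans (Function.update_of_ne hx.ne _ _)
    simp only [List.cons_append, prenex, sat_quant, step, BoundedQuant.and_right_iff hT]

end HFormula

/-! ### Tables of arithmetic as sets of traces -/

/-- Extension of a sequence by a new first entry; on assignments, the binding of a fresh variable
numbered in de Bruijn style. -/
def push {α : Type*} (a : α) (v : ℕ → α) : ℕ → α
  | 0 => a
  | i + 1 => v i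

theorem update_comp_push {α : Type*} {k : ℕ} {ρ : ℕ → ℕ} (hρ : ∀ i, ρ i < k) (As : ℕ → α) (a : α) :
    Function.update As k a ∘ push k ρ = push a (As ∘ ρ) := by
  funext i
  cases i with
  | zero => exact Function.update_self k a As
  | succ i => exact Function.update_of_ne (hρ i).ne a As

/-- `P` is expressible if it is defined, on nonempty sets of traces, by a HyperLTL formula. The
formula is required in prenex form with bound variables `k, k + 1, …`, for every `k` and every
choice `ρ` of names below `k` for its free variables; this makes the notion closed under the
Boolean operations and under quantification over traces. -/
def Expressible (P : Set (Trace ℕ) → (ℕ → Trace ℕ) → Prop) : Prop :=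
  ∀ k (ρ : ℕ → ℕ), (∀ i, ρ i < k) → ∃ (l : List Bool) (θ : QF ℕ),
    (∀ x ∈ θ.freeVars, x < k + l.length) ∧
      ∀ T, T.Nonempty → ∀ As, (HFormula.prenex l k θ).sat T As ↔ P T (As ∘ ρ)

namespace Expressible

variable {P P' : Set (Trace ℕ) → (ℕ → Trace ℕ) → Prop}

theorem of_iff (h : Expressible P) (e : ∀ T v, P' T v ↔ P T v) : Expressible P' := by
  rwa [show P' = P from funext₂ fun T v => propext (e T v)]

theorem qf (θ : QF ℕ) : Expressible fun _ v => θ.sat v := by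
  refine fun k ρ hρ => ⟨[], θ.rename ρ, fun x hx => ?_, fun T _ As => θ.sat_rename ρ As⟩
  obtain ⟨i, rfl⟩ := θ.freeVars_rename_subset ρ hx
  exact hρ i

theorem neg (h : Expressible P) : Expressible fun T v => ¬ P T v := by
  intro k ρ hρ
  obtain ⟨l, θ, hθ, hsat⟩ := h k ρ hρ
  refine ⟨l.map not, θ.neg, fun x hx => ?_, fun T hT As => ?_⟩
  · rw [List.length_map]
    exact hθ x hx
  · rw [HFormula.sat_prenex_neg, hsat T hT]

theorem and (h : Expressible P) (h' : Expressible P') :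
    Expressible fun T v => P T v ∧ P' T v := by
  intro k ρ hρ
  obtain ⟨l, θ, hθ, hsat⟩ := h k ρ hρ
  obtain ⟨l', θ', hθ', hsat'⟩ := h' (k + l.length) ρ fun i => Nat.lt_add_right _ (hρ i)
  refine ⟨l ++ l', θ.conj θ', fun x hx => ?_, fun T hT As => ?_⟩
  · rw [List.length_append]
    obtain hx | hx := hx
    · exact (hθ x hx).trans_le (by omega)
    · exact (hθ' x hx).trans_le (by omega)
  · refine (HFormula.sat_prenex_append_conj hT hθ fun Bs hBs => ?_).trans
      (and_congr_left fun _ => hsat T hT As)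
    rw [hsat' T hT, show Bs ∘ ρ = As ∘ ρ from funext fun i => hBs _ (hρ i)]

theorem imp (h : Expressible P) (h' : Expressible P') :
    Expressible fun T v => P T v → P' T v :=
  (h.and h'.neg).neg.of_iff fun _ _ => by rw [not_and, not_not]

theorem ex (h : Expressible P) : Expressible fun T v => ∃ t ∈ T, P T (push t v) := by
  intro k ρ hρ
  obtain ⟨l, θ, hθ, hsat⟩ := h (k + 1) (push k ρ) fun
    | 0 => k.lt_succ_self
    | i + 1 => (hρ i).trans k.lt_succ_self
  refine ⟨true :: l, θ, fun x hx => (hθ x hx).trans_le (by rw [List.length_cons]; omega),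
    fun T hT As => exists_congr fun t => and_congr_right fun _ => ?_⟩
  rw [hsat T hT, update_comp_push hρ]

theorem all (h : Expressible P) : Expressible fun T v => ∀ t ∈ T, P T (push t v) :=
  h.neg.ex.neg.of_iff fun _ _ => by push Not; rfl

theorem reindex (h : Expressible P) (σ : ℕ → ℕ) : Expressible fun T v => P T (v ∘ σ) :=
  fun k ρ hρ => h k (ρ ∘ σ) fun i => hρ (σ i)

theorem forall_lt {P : ℕ → Set (Trace ℕ) → (ℕ → Trace ℕ) → Prop} (h : ∀ p, Expressible (P p))
    (n : ℕ) : Expressible fun T v => ∀ p < n, P p T v := by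
  induction n with
  | zero =>
    refine (qf (.disj (.atom 0 0) (.neg (.atom 0 0)))).of_iff fun _ _ => ?_
    simp only [QF.sat, em, Nat.not_lt_zero, false_imp_iff, implies_true]
  | succ n ih => exact (ih.and (h n)).of_iff fun _ _ => Nat.forall_lt_succ_right

end Expressible

namespace Trace

/-- The proposition `p` holds at position `n` of `t` and nowhere else. -/
def MarkedAt (t : Trace ℕ) (p n : ℕ) : Prop := ∀ j, p ∈ t j ↔ j = n

/-- Some position satisfies `p` in `s` and `q` in `t`. -/
def Meets (s : Trace ℕ) (p : ℕ) (t : Trace ℕ) (q : ℕ) : Prop := ∃ j, p ∈ s j ∧ q ∈ t j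

/-- Some position satisfying `p` in `s` strictly precedes one satisfying `q` in `t`. -/
def Precedes (s : Trace ℕ) (p : ℕ) (t : Trace ℕ) (q : ℕ) : Prop :=
  ∃ i j, p ∈ s i ∧ q ∈ t (j + (1 + i))

/-- Some position satisfying `p` in `s` is directly followed by one satisfying `q` in `t`. -/
def Abuts (s : Trace ℕ) (p : ℕ) (t : Trace ℕ) (q : ℕ) : Prop := ∃ j, p ∈ s j ∧ q ∈ t (1 + j)

section Marked

variable {s t : Trace ℕ} {p q m n : ℕ}

theorem MarkedAt.mem_zero_iff (ht : t.MarkedAt q n) : q ∈ t 0 ↔ n = 0 := (ht 0).trans eq_comm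

theorem MarkedAt.meets_iff (hs : s.MarkedAt p m) (ht : t.MarkedAt q n) :
    s.Meets p t q ↔ m = n := by
  simp only [Meets, hs _, ht _, exists_eq_left]

theorem MarkedAt.precedes_iff (hs : s.MarkedAt p m) (ht : t.MarkedAt q n) :
    s.Precedes p t q ↔ m < n := by
  simp only [Precedes, hs _, ht _, exists_and_left, exists_eq_left]
  exact ⟨fun ⟨j, hj⟩ => by omega, fun h => ⟨n - m - 1, by omega⟩⟩

theorem MarkedAt.abuts_iff (hs : s.MarkedAt p m) (ht : t.MarkedAt q n) :
    s.Abuts p t q ↔ n = m + 1 := by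
  rw [Abuts, Nat.add_comm m 1, eq_comm]
  simp only [hs _, ht _, exists_eq_left]

end Marked

theorem exists_markedAt_iff {t : Trace ℕ} {p : ℕ} :
    (∃ n, t.MarkedAt p n) ↔ t.Meets p t p ∧ ¬ t.Precedes p t p := by
  constructor
  · rintro ⟨n, hn⟩
    rw [hn.meets_iff hn, hn.precedes_iff hn]
    exact ⟨rfl, lt_irrefl n⟩
  · rintro ⟨⟨n, hn, -⟩, hlt⟩
    have no_pair {i j : ℕ} (hi : p ∈ t i) (hj : p ∈ t j) : ¬ i < j := fun hij =>
      hlt ⟨i, j - i - 1, hi, by rwa [show j - i - 1 + (1 + i) = j by omega]⟩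
    refine ⟨n, fun j => ⟨fun hj => ?_, fun h => h ▸ hn⟩⟩
    exact le_antisymm (not_lt.1 (no_pair hn hj)) (not_lt.1 (no_pair hj hn))

end Trace

namespace Expressible

theorem mem_zero (p x : ℕ) : Expressible fun _ v => p ∈ v x 0 := qf (.atom p x)

theorem meets (p x q y : ℕ) : Expressible fun _ v => (v x).Meets p (v y) q :=
  (qf (.eventually (.conj (.atom p x) (.atom q y)))).of_iff fun _ _ => by
    simp only [QF.sat_eventually, QF.sat_conj, QF.sat, shiftAsg_apply, Nat.zero_add, Trace.Meets]

theorem precedes (p x q y : ℕ) : Expressible fun _ v => (v x).Precedes p (v y) q :=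
  (qf (.eventually (.conj (.atom p x) (.next (.eventually (.atom q y)))))).of_iff fun _ _ => by
    simp only [QF.sat_eventually, QF.sat_conj, QF.sat, shiftAsg_apply, Nat.zero_add,
      Trace.Precedes, exists_and_left, Nat.add_assoc]

theorem abuts (p x q y : ℕ) : Expressible fun _ v => (v x).Abuts p (v y) q :=
  (qf (.eventually (.conj (.atom p x) (.next (.atom q y))))).of_iff fun _ _ => by
    simp only [QF.sat_eventually, QF.sat_conj, QF.sat, shiftAsg_apply, Nat.zero_add, Trace.Abuts]

end Expressible

/-- The entries of the row of the table of `G` for the arguments `x` and `y`. -/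
def tableEntry (G : ℕ → ℕ) (x y : ℕ) : ℕ → ℕ
  | 0 => x
  | 1 => y
  | 2 => x + y
  | 3 => x * y
  | _ => G x

/-- `t` codes a row of the table of `G`: the position of the unique occurrence of the proposition
`p < 5` is the `p`-th entry of the row. -/
def IsRow (G : ℕ → ℕ) (x y : ℕ) (t : Trace ℕ) : Prop :=
  ∀ p < 5, t.MarkedAt p (tableEntry G x y p)

/-- `T` consists of traces coding the rows of the table of `+`, `·` and `G`. -/
structure EncodesTable (T : Set (Trace ℕ)) (G : ℕ → ℕ) : Prop where
  isRow_of_mem : ∀ t ∈ T, ∃ x y, IsRow G x y t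
  exists_isRow : ∀ x y, ∃ t ∈ T, IsRow G x y t

/-- HyperLTL-expressible axioms for the sets of traces that code the table of some function: they
are the recursion equations of `+` and `·`, together with single-valuedness of the last column. -/
structure IsTable (T : Set (Trace ℕ)) : Prop where
  marked : ∀ t ∈ T, ∀ p < 5, t.Meets p t p ∧ ¬ t.Precedes p t p
  zero : ∃ t ∈ T, 0 ∈ t 0
  succ : ∀ s ∈ T, ∃ t ∈ T, s.Abuts 0 t 0
  pair : ∀ s ∈ T, ∀ t ∈ T, ∃ u ∈ T, u.Meets 0 s 0 ∧ u.Meets 1 t 0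
  add_zero : ∀ t ∈ T, 1 ∈ t 0 → t.Meets 2 t 0
  add_succ : ∀ s ∈ T, ∀ t ∈ T, s.Meets 0 t 0 → s.Abuts 1 t 1 → s.Abuts 2 t 2
  mul_zero : ∀ t ∈ T, 1 ∈ t 0 → 3 ∈ t 0
  mul_succ : ∀ s ∈ T, ∀ t ∈ T, s.Meets 0 t 0 → s.Abuts 1 t 1 →
    ∀ u ∈ T, u.Meets 0 s 3 → u.Meets 1 s 0 → u.Meets 2 t 3
  functional : ∀ s ∈ T, ∀ t ∈ T, s.Meets 0 t 0 → s.Meets 4 t 4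

theorem expressible_isTable : Expressible fun T _ => IsTable T := by
  open Expressible in
  have conjunction :=
    (forall_lt (fun p => (meets p 0 p 0).and (precedes p 0 p 0).neg) 5).all.and <|
    (mem_zero 0 0).ex.and <|
    (abuts 0 1 0 0).ex.all.and <|
    ((meets 0 0 0 2).and (meets 1 0 0 1)).ex.all.all.and <|
    ((mem_zero 1 0).imp (meets 2 0 0 0)).all.and <|
    ((meets 0 1 0 0).imp ((abuts 1 1 1 0).imp (abuts 2 1 2 0))).all.all.and <|
    ((mem_zero 1 0).imp (mem_zero 3 0)).all.and <|
    ((meets 0 1 0 0).imp ((abuts 1 1 1 0).imp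
      ((meets 0 0 3 2).imp ((meets 1 0 0 2).imp (meets 2 0 3 1))).all)).all.all.and <|
    ((meets 0 1 0 0).imp (meets 4 1 4 0)).all.all
  exact conjunction.of_iff fun T _ =>
    ⟨fun ⟨h₁, h₂, h₃, h₄, h₅, h₆, h₇, h₈, h₉⟩ => ⟨h₁, h₂, h₃, h₄, h₅, h₆, h₇, h₈, h₉⟩,
      fun ⟨h₁, h₂, h₃, h₄, h₅, h₆, h₇, h₈, h₉⟩ => ⟨h₁, h₂, h₃, h₄, h₅, h₆, h₇, h₈, h₉⟩⟩

namespace IsTable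

section Columns

variable {T : Set (Trace ℕ)} {c : Trace ℕ → ℕ → ℕ}

theorem exists_col_zero (h : IsTable T) (hc : ∀ t ∈ T, ∀ p < 5, t.MarkedAt p (c t p)) (n : ℕ) :
    ∃ t ∈ T, c t 0 = n := by
  induction n with
  | zero =>
    obtain ⟨t, ht, h0⟩ := h.zero
    exact ⟨t, ht, (hc t ht 0 (by decide)).mem_zero_iff.1 h0⟩
  | succ n ih =>
    obtain ⟨s, hs, rfl⟩ := ih
    obtain ⟨t, ht, hst⟩ := h.succ s hs
    exact ⟨t, ht, ((hc s hs 0 (by decide)).abuts_iff (hc t ht 0 (by decide))).1 hst⟩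

theorem exists_col_zero_one (h : IsTable T) (hc : ∀ t ∈ T, ∀ p < 5, t.MarkedAt p (c t p))
    (x y : ℕ) : ∃ u ∈ T, c u 0 = x ∧ c u 1 = y := by
  obtain ⟨s, hs, rfl⟩ := h.exists_col_zero hc x
  obtain ⟨t, ht, rfl⟩ := h.exists_col_zero hc y
  obtain ⟨u, hu, h0, h1⟩ := h.pair s hs t ht
  exact ⟨u, hu, ((hc u hu 0 (by decide)).meets_iff (hc s hs 0 (by decide))).1 h0,
    ((hc u hu 1 (by decide)).meets_iff (hc t ht 0 (by decide))).1 h1⟩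

theorem col_two_eq (h : IsTable T) (hc : ∀ t ∈ T, ∀ p < 5, t.MarkedAt p (c t p)) (y : ℕ) :
    ∀ t ∈ T, c t 1 = y → c t 2 = c t 0 + y := by
  have mark {t : Trace ℕ} (ht : t ∈ T) (p : ℕ) (hp : p < 5 := by decide) :
    t.MarkedAt p (c t p) := hc t ht p hp
  induction y with
  | zero =>
    exact fun t ht h1 => ((mark ht 2).meets_iff (mark ht 0)).1
      (h.add_zero t ht ((mark ht 1).mem_zero_iff.2 h1))
  | succ y ih =>
    intro t ht h1
    obtain ⟨s, hs, hs0, hs1⟩ := h.exists_col_zero_one hc (c t 0) y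
    have := ((mark hs 2).abuts_iff (mark ht 2)).1 <| h.add_succ s hs t ht
      (((mark hs 0).meets_iff (mark ht 0)).2 hs0)
      (((mark hs 1).abuts_iff (mark ht 1)).2 (by rw [h1, hs1]))
    rw [this, ih s hs hs1, hs0, Nat.add_assoc]

theorem col_three_eq (h : IsTable T) (hc : ∀ t ∈ T, ∀ p < 5, t.MarkedAt p (c t p)) (y : ℕ) :
    ∀ t ∈ T, c t 1 = y → c t 3 = c t 0 * y := by
  have mark {t : Trace ℕ} (ht : t ∈ T) (p : ℕ) (hp : p < 5 := by decide) :
    t.MarkedAt p (c t p) := hc t ht p hp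
  induction y with
  | zero =>
    exact fun t ht h1 => (mark ht 3).mem_zero_iff.1
      (h.mul_zero t ht ((mark ht 1).mem_zero_iff.2 h1))
  | succ y ih =>
    intro t ht h1
    obtain ⟨s, hs, hs0, hs1⟩ := h.exists_col_zero_one hc (c t 0) y
    obtain ⟨u, hu, hu0, hu1⟩ := h.exists_col_zero_one hc (c s 3) (c s 0)
    have := ((mark hu 2).meets_iff (mark ht 3)).1 <| h.mul_succ s hs t ht
      (((mark hs 0).meets_iff (mark ht 0)).2 hs0)
      (((mark hs 1).abuts_iff (mark ht 1)).2 (by rw [h1, hs1])) u hu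
      (((mark hu 0).meets_iff (mark hs 3)).2 hu0) (((mark hu 1).meets_iff (mark hs 0)).2 hu1)
    rw [← this, h.col_two_eq hc _ u hu hu1, hu0, ih s hs hs1, hs0, Nat.mul_succ]

end Columns

theorem exists_encodesTable {T : Set (Trace ℕ)} (h : IsTable T) : ∃ G, EncodesTable T G := by
  have columns : ∀ t ∈ T, ∀ p < 5, ∃ n, t.MarkedAt p n := fun t ht p hp =>
    Trace.exists_markedAt_iff.2 (h.marked t ht p hp)
  choose! c hc using columns
  choose r hr hr0 using h.exists_col_zero hc
  have isRow {t : Trace ℕ} (ht : t ∈ T) : IsRow (fun n => c (r n) 4) (c t 0) (c t 1) t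
    | 0, hp => hc t ht 0 hp
    | 1, hp => hc t ht 1 hp
    | 2, hp => by simpa only [tableEntry, ← h.col_two_eq hc _ t ht rfl] using hc t ht 2 hp
    | 3, hp => by simpa only [tableEntry, ← h.col_three_eq hc _ t ht rfl] using hc t ht 3 hp
    | 4, hp => by
      have := ((hc _ (hr (c t 0)) 4 hp).meets_iff (hc t ht 4 hp)).1 <|
        h.functional _ (hr _) t ht
          (((hc _ (hr _) 0 (by decide)).meets_iff (hc t ht 0 (by decide))).2 (hr0 _))
      simpa only [tableEntry, this] using hc t ht 4 hp
  refine ⟨_, fun t ht => ⟨_, _, isRow ht⟩, fun x y => ?_⟩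
  obtain ⟨u, hu, rfl, rfl⟩ := h.exists_col_zero_one hc x y
  exact ⟨u, hu, isRow hu⟩

end IsTable

namespace EncodesTable

variable {T : Set (Trace ℕ)} {G : ℕ → ℕ}

theorem exists_markedAt_zero (h : EncodesTable T G) {t : Trace ℕ} (ht : t ∈ T) :
    ∃ x, t.MarkedAt 0 x := by
  obtain ⟨x, _, r⟩ := h.isRow_of_mem t ht
  exact ⟨x, r 0 (by decide)⟩

theorem add_succ (h : EncodesTable T G) : ∀ s ∈ T, ∀ t ∈ T,
    s.Meets 0 t 0 → s.Abuts 1 t 1 → s.Abuts 2 t 2 := by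
  intro s hs t ht
  obtain ⟨x, y, r⟩ := h.isRow_of_mem s hs
  obtain ⟨x', y', r'⟩ := h.isRow_of_mem t ht
  rw [(r 0 (by decide)).meets_iff (r' 0 (by decide)),
    (r 1 (by decide)).abuts_iff (r' 1 (by decide)),
    (r 2 (by decide)).abuts_iff (r' 2 (by decide))]
  rintro (rfl : x = x') (rfl : y' = y + 1)
  exact (Nat.add_assoc x y 1).symm

theorem mul_succ (h : EncodesTable T G) : ∀ s ∈ T, ∀ t ∈ T, s.Meets 0 t 0 → s.Abuts 1 t 1 →
    ∀ u ∈ T, u.Meets 0 s 3 → u.Meets 1 s 0 → u.Meets 2 t 3 := by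
  intro s hs t ht
  obtain ⟨x, y, r⟩ := h.isRow_of_mem s hs
  obtain ⟨x', y', r'⟩ := h.isRow_of_mem t ht
  rw [(r 0 (by decide)).meets_iff (r' 0 (by decide)),
    (r 1 (by decide)).abuts_iff (r' 1 (by decide))]
  rintro (rfl : x = x') (rfl : y' = y + 1) u hu
  obtain ⟨a, b, r''⟩ := h.isRow_of_mem u hu
  rw [(r'' 0 (by decide)).meets_iff (r 3 (by decide)),
    (r'' 1 (by decide)).meets_iff (r 0 (by decide)),
    (r'' 2 (by decide)).meets_iff (r' 3 (by decide))]
  rintro (rfl : a = x * y) (rfl : b = x)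
  exact (Nat.mul_succ b y).symm

theorem isTable (h : EncodesTable T G) : IsTable T where
  marked t ht p hp := by
    obtain ⟨x, y, r⟩ := h.isRow_of_mem t ht
    exact Trace.exists_markedAt_iff.1 ⟨_, r p hp⟩
  zero := by
    obtain ⟨t, ht, r⟩ := h.exists_isRow 0 0
    exact ⟨t, ht, (r 0 (by decide)).mem_zero_iff.2 rfl⟩
  succ s hs := by
    obtain ⟨x, y, r⟩ := h.isRow_of_mem s hs
    obtain ⟨t, ht, r'⟩ := h.exists_isRow (x + 1) 0
    exact ⟨t, ht, ((r 0 (by decide)).abuts_iff (r' 0 (by decide))).2 rfl⟩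
  pair s hs t ht := by
    obtain ⟨x, _, r⟩ := h.isRow_of_mem s hs
    obtain ⟨y, _, r'⟩ := h.isRow_of_mem t ht
    obtain ⟨u, hu, r''⟩ := h.exists_isRow x y
    exact ⟨u, hu, ((r'' 0 (by decide)).meets_iff (r 0 (by decide))).2 rfl,
      ((r'' 1 (by decide)).meets_iff (r' 0 (by decide))).2 rfl⟩
  add_zero t ht := by
    obtain ⟨x, y, r⟩ := h.isRow_of_mem t ht
    rw [(r 1 (by decide)).mem_zero_iff, (r 2 (by decide)).meets_iff (r 0 (by decide))]
    rintro (rfl : y = 0)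
    rfl
  add_succ := h.add_succ
  mul_zero t ht := by
    obtain ⟨x, y, r⟩ := h.isRow_of_mem t ht
    rw [(r 1 (by decide)).mem_zero_iff, (r 3 (by decide)).mem_zero_iff]
    rintro (rfl : y = 0)
    rfl
  mul_succ := h.mul_succ
  functional s hs t ht := by
    obtain ⟨x, y, r⟩ := h.isRow_of_mem s hs
    obtain ⟨x', y', r'⟩ := h.isRow_of_mem t ht
    rw [(r 0 (by decide)).meets_iff (r' 0 (by decide)),
      (r 4 (by decide)).meets_iff (r' 4 (by decide))]
    exact congrArg G

end EncodesTable

/-! ### Arithmetic in HyperLTL -/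

/-- `Q` is expressible through the coding of numbers by traces: numbers are read off from the
first column of a table, and `G` is the function coded by the table. -/
def NumExpressible (Q : (ℕ → ℕ) → (ℕ → ℕ) → Prop) : Prop :=
  ∃ P, Expressible P ∧ ∀ T G, EncodesTable T G → ∀ (As : ℕ → Trace ℕ) (v : ℕ → ℕ),
    (∀ i, (As i).MarkedAt 0 (v i)) → (P T As ↔ Q v G)

namespace NumExpressible

variable {Q Q' : (ℕ → ℕ) → (ℕ → ℕ) → Prop}

theorem of_iff (h : NumExpressible Q) (e : ∀ v G, Q' v G ↔ Q v G) : NumExpressible Q' := by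
  rwa [show Q' = Q from funext₂ fun v G => propext (e v G)]

theorem neg (h : NumExpressible Q) : NumExpressible fun v G => ¬ Q v G := by
  obtain ⟨P, hP, hsat⟩ := h
  exact ⟨_, hP.neg, fun T G hT As v hv => not_congr (hsat T G hT As v hv)⟩

theorem and (h : NumExpressible Q) (h' : NumExpressible Q') :
    NumExpressible fun v G => Q v G ∧ Q' v G := by
  obtain ⟨P, hP, hsat⟩ := h
  obtain ⟨P', hP', hsat'⟩ := h'
  exact ⟨_, hP.and hP', fun T G hT As v hv =>
    and_congr (hsat T G hT As v hv) (hsat' T G hT As v hv)⟩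

theorem or (h : NumExpressible Q) (h' : NumExpressible Q') :
    NumExpressible fun v G => Q v G ∨ Q' v G :=
  (h.neg.and h'.neg).neg.of_iff fun _ _ => or_iff_not_and_not

theorem ex (h : NumExpressible Q) : NumExpressible fun v G => ∃ n, Q (push n v) G := by
  obtain ⟨P, hP, hsat⟩ := h
  have marked_push {As : ℕ → Trace ℕ} {v : ℕ → ℕ} (hv : ∀ i, (As i).MarkedAt 0 (v i))
      {t : Trace ℕ} {n : ℕ} (ht : t.MarkedAt 0 n) : ∀ i, (push t As i).MarkedAt 0 (push n v i)
    | 0 => ht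
    | i + 1 => hv i
  refine ⟨_, hP.ex, fun T G hT As v hv => ⟨fun ⟨t, ht, h⟩ => ?_, fun ⟨n, h⟩ => ?_⟩⟩
  · obtain ⟨n, hn⟩ := hT.exists_markedAt_zero ht
    exact ⟨n, (hsat T G hT _ _ (marked_push hv hn)).1 h⟩
  · obtain ⟨t, ht, r⟩ := hT.exists_isRow n 0
    exact ⟨t, ht, (hsat T G hT _ _ (marked_push hv (r 0 (by decide)))).2 h⟩

theorem all (h : NumExpressible Q) : NumExpressible fun v G => ∀ n, Q (push n v) G :=
  h.neg.ex.neg.of_iff fun _ _ => not_exists_not.symm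

theorem reindex (h : NumExpressible Q) (σ : ℕ → ℕ) : NumExpressible fun v G => Q (v ∘ σ) G := by
  obtain ⟨P, hP, hsat⟩ := h
  exact ⟨_, hP.reindex σ, fun T G hT As v hv => hsat T G hT _ _ fun i => hv (σ i)⟩

theorem eq (i j : ℕ) : NumExpressible fun v _ => v i = v j :=
  ⟨_, Expressible.meets 0 i 0 j, fun _ _ _ _ _ hv => (hv i).meets_iff (hv j)⟩

theorem lt (i j : ℕ) : NumExpressible fun v _ => v i < v j :=
  ⟨_, Expressible.precedes 0 i 0 j, fun _ _ _ _ _ hv => (hv i).precedes_iff (hv j)⟩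

theorem eq_zero (i : ℕ) : NumExpressible fun v _ => v i = 0 :=
  ⟨_, Expressible.mem_zero 0 i, fun _ _ _ _ _ hv => (hv i).mem_zero_iff⟩

theorem succ (i j : ℕ) : NumExpressible fun v _ => v j = v i + 1 :=
  ⟨_, Expressible.abuts 0 i 0 j, fun _ _ _ _ _ hv => (hv i).abuts_iff (hv j)⟩

theorem tableEntry_eq (p : ℕ) (hp : p < 5) (i j k : ℕ) :
    NumExpressible fun v G => tableEntry G (v i) (v j) p = v k := by
  refine ⟨_, ((Expressible.meets 0 0 0 (i + 1)).and
    ((Expressible.meets 1 0 0 (j + 1)).and (Expressible.meets p 0 0 (k + 1)))).ex,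
    fun T G hT As v hv => ⟨?_, fun h => ?_⟩⟩
  · rintro ⟨t, ht, h0, h1, hp'⟩
    obtain ⟨x, y, r⟩ := hT.isRow_of_mem t ht
    obtain rfl : x = v i := ((r 0 (by decide)).meets_iff (hv i)).1 h0
    obtain rfl : y = v j := ((r 1 (by decide)).meets_iff (hv j)).1 h1
    exact ((r p hp).meets_iff (hv k)).1 hp'
  · obtain ⟨t, ht, r⟩ := hT.exists_isRow (v i) (v j)
    exact ⟨t, ht, ((r 0 (by decide)).meets_iff (hv i)).2 rfl,
      ((r 1 (by decide)).meets_iff (hv j)).2 rfl, ((r p hp).meets_iff (hv k)).2 h⟩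

end NumExpressible

theorem exists_eq_and_eq_and {α β : Type*} {a : α} {b : β} {R : α → β → Prop} :
    (∃ x y, x = a ∧ y = b ∧ R x y) ↔ R a b := by
  simp only [exists_and_left, exists_eq_left]

theorem ATerm.numExpressible_eval (t : ATerm) :
    NumExpressible fun v G => v 0 = t.eval (fun i => v (i + 1)) fun _ => G := by
  have binary {s t : ATerm} {p : ℕ} (hp : p < 5)
      (hs : NumExpressible fun v G => v 0 = s.eval (fun i => v (i + 1)) fun _ => G)
      (ht : NumExpressible fun v G => v 0 = t.eval (fun i => v (i + 1)) fun _ => G) :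
      NumExpressible fun v G => tableEntry G (s.eval (fun i => v (i + 1)) fun _ => G)
        (t.eval (fun i => v (i + 1)) fun _ => G) p = v 0 :=
    ((hs.reindex (push 1 (· + 3))).and ((ht.reindex (push 0 (· + 3))).and
      (NumExpressible.tableEntry_eq p hp 1 0 2))).ex.ex.of_iff fun v G =>
        (exists_eq_and_eq_and (R := fun x y => tableEntry G x y p = v 0)).symm
  induction t with
  | var x => exact NumExpressible.eq 0 (x + 1)
  | zero => exact NumExpressible.eq_zero 0
  | one =>
    exact ((NumExpressible.eq_zero 0).and (.succ 0 1)).ex.of_iff fun _ _ =>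
      ⟨fun h => ⟨0, rfl, h⟩, fun ⟨_, hx, h⟩ => h.trans (congrArg (· + 1) hx)⟩
  | add s t hs ht => exact (binary (p := 2) (by decide) hs ht).of_iff fun _ _ => eq_comm
  | mul s t hs ht => exact (binary (p := 3) (by decide) hs ht).of_iff fun _ _ => eq_comm
  | app f t ht => exact (binary (p := 4) (by decide) ht ht).of_iff fun _ _ => eq_comm

theorem AForm.numExpressible_sat (φ : AForm) :
    NumExpressible fun v G => φ.sat v fun _ => G := by
  have update_eq (v : ℕ → ℕ) (x n : ℕ) :
      Function.update v x n = push n v ∘ fun y => if y = x then 0 else y + 1 := by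
    funext y
    by_cases h : y = x <;> simp [Function.update, h, push]
  induction φ with
  | eq s t =>
    exact (s.numExpressible_eval.and t.numExpressible_eval).ex.of_iff fun _ _ =>
      ⟨fun h => ⟨_, rfl, h⟩, fun ⟨_, hs, ht⟩ => hs.symm.trans ht⟩
  | lt s t =>
    exact ((s.numExpressible_eval.reindex (push 1 (· + 2))).and
      ((t.numExpressible_eval.reindex (push 0 (· + 2))).and (.lt 1 0))).ex.ex.of_iff fun _ _ =>
        (exists_eq_and_eq_and (R := (· < ·))).symm
  | neg φ ih => exact ih.neg
  | disj φ ψ ihφ ihψ => exact ihφ.or ihψ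
  | exN x φ ih =>
    exact (ih.reindex fun y => if y = x then 0 else y + 1).ex.of_iff fun v G =>
      exists_congr fun n => by rw [update_eq]
  | allN x φ ih =>
    exact (ih.reindex fun y => if y = x then 0 else y + 1).all.of_iff fun v G =>
      forall_congr' fun n => by rw [update_eq]

theorem QF.codeWith_injective : Function.Injective (QF.codeWith (AP := ℕ) id) := by
  intro ψ
  induction ψ <;> rintro (_ | _ | _ | _ | _) h <;> grind [QF.codeWith, Nat.pair_eq_pair, id]

theorem HFormula.codeWith_injective : Function.Injective (HFormula.codeWith (AP := ℕ) id) := by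
  intro φ
  induction φ <;> rintro (_ | _ | _) h <;>
    grind [HFormula.codeWith, Nat.pair_eq_pair, QF.codeWith_injective.eq_iff]

/-- The sentence stating that some trace carries the proposition `0` at position `x`, and that
`prenex l 1 θ` holds with this trace assigned to variable `0`. -/
def markedSentence (l : List Bool) (θ : QF ℕ) (x : ℕ) : HFormula ℕ :=
  .ex 0 (.prenex l 1 (.conj (QF.next^[x] (.atom 0 0)) θ))

theorem HFormula.primrec_codeWith_prenex {θ : ℕ → QF ℕ}
    (hθ : Primrec fun x => (θ x).codeWith id) (l : List Bool) (k : ℕ) :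
    Primrec fun x => (prenex l k (θ x)).codeWith id := by
  induction l generalizing k with
  | nil => exact Primrec₂.natPair.comp (.const 2) hθ
  | cons b l ih =>
    cases b
    · exact Primrec₂.natPair.comp (.const 1) (Primrec₂.natPair.comp (.const k) (ih (k + 1)))
    · exact Primrec₂.natPair.comp (.const 0) (Primrec₂.natPair.comp (.const k) (ih (k + 1)))

theorem QF.primrec_codeWith_iterate_next (θ : QF ℕ) :
    Primrec fun x => (QF.next^[x] θ).codeWith id := by
  have code_iterate : (fun x => (QF.next^[x] θ).codeWith id) =
      fun x => (Nat.pair 3)^[x] (θ.codeWith id) := by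
    funext x
    induction x with
    | zero => rfl
    | succ x ih => rw [Function.iterate_succ_apply', Function.iterate_succ_apply', ← ih]; rfl
  rw [code_iterate]
  exact Primrec.nat_iterate .id (.const _) (Primrec₂.natPair.comp (.const 3) .snd).to₂

theorem primrec_codeWith_markedSentence (l : List Bool) (θ : QF ℕ) :
    Primrec fun x => (markedSentence l θ x).codeWith id := by
  have matrix : Primrec fun x => (QF.conj (QF.next^[x] (.atom 0 0)) θ).codeWith id :=
    Primrec₂.natPair.comp (.const 1) <| Primrec₂.natPair.comp (.const 2) <|
      Primrec₂.natPair.comp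
        (Primrec₂.natPair.comp (.const 1) (QF.primrec_codeWith_iterate_next (.atom 0 0)))
        (.const _)
  exact Primrec₂.natPair.comp (.const 0) <| Primrec₂.natPair.comp (.const 0) <|
    HFormula.primrec_codeWith_prenex matrix l 1

/-- `S` reduces arithmetic to HyperLTL: the sentence `S x` forces its models to code the table of
a function `G`, and then expresses the property `Q x G`. -/
structure ReducesTo (Q : ℕ → (ℕ → ℕ) → Prop) (S : ℕ → HFormula ℕ) : Prop where
  isSentence : ∀ x, (S x).IsSentence
  computable : Computable fun x => (S x).codeWith id
  encodesTable : ∀ x T, HModels T (S x) → ∃ G, EncodesTable T G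
  models_iff : ∀ x T G, EncodesTable T G → (HModels T (S x) ↔ Q x G)

theorem isSentence_markedSentence {l : List Bool} {θ : QF ℕ}
    (hθ : ∀ x ∈ θ.freeVars, x < 1 + l.length) (x : ℕ) : (markedSentence l θ x).IsSentence := by
  refine Set.sdiff_eq_empty.2 fun y hy => Nat.lt_one_iff.1 ?_
  refine HFormula.lt_of_mem_freeVars_prenex (fun z hz => ?_) y hy
  obtain hz | hz := hz
  · rw [QF.freeVars, QF.freeVars_iterate_next] at hz
    exact hz ▸ Nat.add_pos_left one_pos _
  · exact hθ z hz

theorem models_markedSentence_iff (l : List Bool) (θ : QF ℕ) (x : ℕ) (T : Set (Trace ℕ)) :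
    HModels T (markedSentence l θ x) ↔
      ∃ t ∈ T, 0 ∈ t x ∧ (HFormula.prenex l 1 θ).sat T (push t fun _ _ => ∅) := by
  refine exists_congr fun t => and_congr_right fun ht => ?_
  have fresh : ∀ y ∈ (QF.next^[x] (QF.atom 0 0)).freeVars, y < 1 := by
    rw [QF.freeVars_iterate_next]
    rintro _ rfl
    exact one_pos
  have update_eq : Function.update (fun _ _ => ∅) 0 t = push t fun _ _ => ∅ := by
    funext y
    cases y <;> rfl
  rw [HFormula.sat_prenex_conj ⟨t, ht⟩ fresh, QF.sat_iterate_next, update_eq]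
  simp only [QF.sat, shiftAsg_apply, push, Nat.zero_add]

theorem AForm.exists_reducesTo (φ : AForm) :
    ∃ S, ReducesTo (fun x G => φ.sat (fun _ => x) fun _ => G) S := by
  obtain ⟨P, hP, hsat⟩ := φ.numExpressible_sat
  obtain ⟨l, θ, hθ, hPsat⟩ := (expressible_isTable.and hP) 1 (fun _ => 0) fun _ => one_pos
  refine ⟨markedSentence l θ, isSentence_markedSentence hθ,
    (primrec_codeWith_markedSentence l θ).to_comp, fun x T h => ?_, fun x T G hT => ?_⟩
  · obtain ⟨t, ht, -, h⟩ := (models_markedSentence_iff l θ x T).1 h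
    exact ((hPsat T ⟨t, ht⟩ _).1 h).1.exists_encodesTable
  · have sat_iff {t : Trace ℕ} (ht : t ∈ T) {y : ℕ} (hy : t.MarkedAt 0 y) :
        (HFormula.prenex l 1 θ).sat T (push t fun _ _ => ∅) ↔ φ.sat (fun _ => y) fun _ => G :=
      (hPsat T ⟨t, ht⟩ _).trans <|
        (and_iff_right hT.isTable).trans (hsat T G hT _ _ fun _ => hy)
    rw [models_markedSentence_iff]
    constructor
    · rintro ⟨t, ht, hx, h⟩
      obtain ⟨y, hy⟩ := hT.exists_markedAt_zero ht
      obtain rfl := (hy x).1 hx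
      exact (sat_iff ht hy).1 h
    · intro h
      obtain ⟨t, ht, r⟩ := hT.exists_isRow x 0
      exact ⟨t, ht, (r 0 (by decide) x).2 rfl, (sat_iff ht (r 0 (by decide))).2 h⟩

/-! ### Evaluation games and hardness -/

/-- A fixed injective polynomial pairing function, used because it is a term of arithmetic. -/
def polyPair (a b : ℕ) : ℕ := (a + b) * (a + b) + a

theorem polyPair_inj {a b c d : ℕ} (h : polyPair a b = polyPair c d) : a = c ∧ b = d := by
  simp only [polyPair] at h
  have : a + b = c + d := by
    refine le_antisymm ?_ ?_ <;> by_contra hlt <;> nlinarith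
  rw [this] at h
  omega

/-- The position in a single unary table reserved for the value at `(a, b)` of table number `k`. -/
def slot (k a b : ℕ) : ℕ := polyPair k (polyPair a b)

theorem exists_leftInverse_polyPair :
    ∃ l r : ℕ → ℕ, ∀ a b, l (polyPair a b) = a ∧ r (polyPair a b) = b := by
  have injective : Function.Injective fun p : ℕ × ℕ => polyPair p.1 p.2 :=
    fun _ _ h => Prod.ext (polyPair_inj h).1 (polyPair_inj h).2
  obtain ⟨u, hu⟩ := injective.hasLeftInverse
  exact ⟨fun m => (u m).1, fun m => (u m).2,
    fun a b => ⟨congrArg Prod.fst (hu (a, b)), congrArg Prod.snd (hu (a, b))⟩⟩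

theorem exists_eq_tables (τ : ℕ → ℕ → ℕ → ℕ) : ∃ G : ℕ → ℕ, ∀ k a b, G (slot k a b) = τ k a b := by
  obtain ⟨l, r, h⟩ := exists_leftInverse_polyPair
  exact ⟨fun m => τ (l m) (l (r m)) (r (r m)), fun k a b => by
    simp only [slot, (h _ _).1, (h _ _).2]⟩

namespace ATerm

/-- The term denoting the number `k`. -/
def numeral : ℕ → ATerm
  | 0 => .zero
  | k + 1 => .add (numeral k) .one

/-- The term `polyPair s t`. -/
def polyPair (s t : ATerm) : ATerm := .add (.mul (.add s t) (.add s t)) s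

/-- The value of table number `k` at `(s, t)`, where all tables are stored in the function `0`. -/
def table (k : ℕ) (s t : ATerm) : ATerm := .app 0 (polyPair (numeral k) (polyPair s t))

/-- The translation of terms that stores the unary functions in tables number `4, 5, …`. -/
def flatten : ATerm → ATerm
  | .app f t => table (f + 4) t.flatten .zero
  | .add s t => .add s.flatten t.flatten
  | .mul s t => .mul s.flatten t.flatten
  | .var x => .var x
  | .zero => .zero
  | .one => .one

@[simp] theorem eval_numeral (k : ℕ) (v : ℕ → ℕ) (F : ℕ → ℕ → ℕ) : (numeral k).eval v F = k := by
  induction k with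
  | zero => rfl
  | succ k ih => exact congrArg (· + 1) ih

@[simp] theorem eval_polyPair (s t : ATerm) (v : ℕ → ℕ) (F : ℕ → ℕ → ℕ) :
    (polyPair s t).eval v F = _root_.polyPair (s.eval v F) (t.eval v F) := rfl

@[simp] theorem eval_table (k : ℕ) (s t : ATerm) (v : ℕ → ℕ) (F : ℕ → ℕ → ℕ) :
    (table k s t).eval v F = F 0 (slot k (s.eval v F) (t.eval v F)) := by
  simp only [table, eval, eval_polyPair, eval_numeral, slot]

theorem eval_flatten (t : ATerm) (v : ℕ → ℕ) (G : ℕ → ℕ) :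
    (t.flatten.eval v fun _ => G) = t.eval v fun f a => G (slot (f + 4) a 0) := by
  induction t with
  | var _ | zero | one => rfl
  | add _ _ hs ht | mul _ _ hs ht => simp only [flatten, eval, hs, ht]
  | app f t ht => simp only [flatten, eval, eval_table, ht]

end ATerm

namespace AForm

/-- Conjunction, as the usual abbreviation. -/
def conj (φ ψ : AForm) : AForm := .neg (.disj (.neg φ) (.neg ψ))

/-- Implication, as the usual abbreviation. -/
def imp (φ ψ : AForm) : AForm := .disj (.neg φ) ψ

/-- Quantification over the numbers satisfying `φ`, existential for `b = true` and universal for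
`b = false`. -/
def relQuant (b : Bool) (x : ℕ) (φ ψ : AForm) : AForm :=
  if b then .exN x (φ.conj ψ) else .allN x (φ.imp ψ)

/-- The translation of formulas that stores the unary functions in tables number `4, 5, …`. -/
def flatten : AForm → AForm
  | .eq s t => .eq s.flatten t.flatten
  | .lt s t => .lt s.flatten t.flatten
  | .neg φ => .neg φ.flatten
  | .disj φ ψ => .disj φ.flatten ψ.flatten
  | .exN x φ => .exN x φ.flatten
  | .allN x φ => .allN x φ.flatten

variable {v : ℕ → ℕ} {F : ℕ → ℕ → ℕ}

@[simp] theorem sat_conj {φ ψ : AForm} : (φ.conj ψ).sat v F ↔ φ.sat v F ∧ ψ.sat v F := by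
  simp only [conj, sat, not_or, not_not]

@[simp] theorem sat_imp {φ ψ : AForm} : (φ.imp ψ).sat v F ↔ (φ.sat v F → ψ.sat v F) :=
  imp_iff_not_or.symm

theorem sat_relQuant {b : Bool} {x : ℕ} {φ ψ : AForm} :
    (relQuant b x φ ψ).sat v F ↔ BoundedQuant b {m | φ.sat (Function.update v x m) F}
      fun m => ψ.sat (Function.update v x m) F := by
  cases b
  · exact forall_congr' fun m => sat_imp
  · exact exists_congr fun m => sat_conj

theorem sat_flatten (φ : AForm) (v : ℕ → ℕ) (G : ℕ → ℕ) :
    (φ.flatten.sat v fun _ => G) ↔ φ.sat v fun f a => G (slot (f + 4) a 0) := by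
  induction φ generalizing v with
  | eq s t | lt s t => simp only [flatten, sat, ATerm.eval_flatten]
  | neg _ ih => exact not_congr (ih v)
  | disj _ _ ihφ ihψ => exact or_congr (ihφ v) (ihψ v)
  | exN x _ ih => exact exists_congr fun m => ih _
  | allN x _ ih => exact forall_congr' fun m => ih _

end AForm

/-- The evaluation game of `n` rounds for a formula with `n` quantifier blocks: the two players
alternately play a list of elements of `E`, starting with the existential player iff `b = true`,
and the existential player wins if the resulting sequence of moves satisfies `M`. Finite lists are
continued by `default`, so that moves of all lengths are comparable with any block length. -/
def QuantGame {ι : Type*} [Inhabited ι] (E : Set ι) : ℕ → Bool → (List (List ι) → Prop) → Prop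
  | 0, _, M => M []
  | n + 1, b, M => BoundedQuant b {w | ∀ i, w.getD i default ∈ E} fun w =>
      QuantGame E n (!b) fun L => M (w :: L)

namespace QuantGame

variable {ι : Type*} [Inhabited ι] {E : Set ι}

theorem succ_tail_iff (hE : default ∈ E) (n : ℕ) (b : Bool) (M : List (List ι) → Prop) :
    QuantGame E (n + 1) b (fun L => M L.tail) ↔ QuantGame E n (!b) M := by
  have nonempty : {w : List ι | ∀ i, w.getD i default ∈ E}.Nonempty := ⟨[], fun _ => hE⟩
  exact BoundedQuant.const_iff nonempty (QuantGame E n (!b) M)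

theorem boundedQuant_iff (n : ℕ) (b : Bool) (M : ι → List (List ι) → Prop) :
    BoundedQuant b E (fun e => QuantGame E (n + 1) b (M e)) ↔
      QuantGame E (n + 1) b fun L =>
        M ((L.headD []).headD default) ((L.headD []).tail :: L.tail) := by
  have legal_cons {e : ι} {w : List ι} (he : e ∈ E) (hw : ∀ i, w.getD i default ∈ E) :
      ∀ i, (e :: w).getD i default ∈ E
    | 0 => he
    | i + 1 => hw i
  have legal_head {w : List ι} (hw : ∀ i, w.getD i default ∈ E) : w.headD default ∈ E := by
    cases w <;> exact hw 0
  have legal_tail {w : List ι} (hw : ∀ i, w.getD i default ∈ E) (i : ℕ) :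
      w.tail.getD i default ∈ E := by
    cases w <;> exact hw (i + 1)
  cases b
  · exact ⟨fun h w hw => h _ (legal_head hw) _ (legal_tail hw),
      fun h e he w hw => h (e :: w) (legal_cons he hw)⟩
  · exact ⟨fun ⟨e, he, w, hw, h⟩ => ⟨e :: w, legal_cons he hw, h⟩,
      fun ⟨w, hw, h⟩ => ⟨_, legal_head hw, _, legal_tail hw, h⟩⟩

end QuantGame

namespace HFormula

variable {AP : Type}

theorem exists_quant_of_prefixList_eq_cons {φ : HFormula AP} {b : Bool} {l : List Bool}
    (h : φ.prefixList = b :: l) : ∃ x φ', φ = quant b x φ' ∧ φ'.prefixList = l := by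
  cases φ with
  | ex x φ | all x φ =>
    obtain ⟨rfl, rfl⟩ := List.cons.inj h
    exact ⟨x, φ, rfl, rfl⟩
  | qf => cases h

theorem exists_quantGame {ι : Type*} [Inhabited ι] (tr : ι → Trace AP) {n : ℕ} {b : Bool}
    {φ : HFormula AP} (h : AltPrefix n b φ.prefixList) :
    ∃ M : (ℕ → Trace AP) → List (List ι) → Prop, ∀ E : Set ι, default ∈ E → ∀ As,
      φ.sat (tr '' E) As ↔ QuantGame E n b (M As) := by
  induction n generalizing b φ with
  | zero =>
    cases φ with
    | qf θ => exact ⟨fun As _ => θ.sat As, fun _ _ _ => Iff.rfl⟩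
    | ex | all => cases h
  | succ n ih =>
    obtain ⟨l₁, l₂, hl, hb, h₂⟩ := h
    induction l₁ generalizing φ with
    | nil =>
      obtain ⟨M, hM⟩ := ih (φ := φ) (b := !b) (by rwa [hl])
      exact ⟨fun As L => M As L.tail, fun E hE As =>
        (hM E hE As).trans (QuantGame.succ_tail_iff hE n b (M As)).symm⟩
    | cons c l₁ ihl =>
      obtain rfl : c = b := hb c List.mem_cons_self
      obtain ⟨x, φ, rfl, hφ⟩ := exists_quant_of_prefixList_eq_cons hl
      obtain ⟨M, hM⟩ := ihl hφ fun d hd => hb d (List.mem_cons_of_mem _ hd)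
      refine ⟨fun As L => M (Function.update As x (tr ((L.headD []).headD default)))
        ((L.headD []).tail :: L.tail), fun E hE As => ?_⟩
      simp only [sat_quant, BoundedQuant.image_iff, hM E hE]
      exact QuantGame.boundedQuant_iff n c fun e => M (Function.update As x (tr e))

end HFormula

/-- Histories of the evaluation game on the rows of a table, with the latest move first. The row of
`x` and `y` in the table of `G` is described by `(x, y, G x)`. -/
abbrev History : Type := List (List (ℕ × ℕ × ℕ))

/-- The history with a given code. -/
def history (h : ℕ) : History := Denumerable.ofNat History h

theorem history_encode (H : History) : history (Encodable.encode H) = H :=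
  Denumerable.ofNat_encode H

open Classical in
/-- The tables describing the evaluation game in terms of codes of histories. Tables `0` and `1`
give the first and last component of the entries of the latest move, table `2` removes the latest
move, and table `3` tells whether a history is won. Table `1` cannot be computed from table `0`
and `G`, since table `3`, and hence `G`, depends on all of `M`. -/
noncomputable def gameTables (M : History → Prop) (F : ℕ → ℕ → ℕ) : ℕ → ℕ → ℕ → ℕ
  | 0, h, i => (((history h).headD []).getD i default).1
  | 1, h, i => (((history h).headD []).getD i default).2.2
  | 2, h, _ => Encodable.encode (history h).tail
  | 3, h, _ => if M (history h).reverse then 1 else 0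
  | f + 4, a, _ => F f a

namespace AForm

open ATerm (var zero one app table)

/-- In terms of `gameTables`: the history `n` extends the history `n + 1` by a legal move. -/
def extendsHistory (n : ℕ) : AForm :=
  .conj (.conj (.eq (table 2 (var n) zero) (var (n + 1))) (.neg (.eq (var n) (var (n + 1)))))
    (.allN (n + 2) (.eq (app 0 (table 0 (var n) (var (n + 2)))) (table 1 (var n) (var (n + 2)))))

/-- In terms of `gameTables`: the existential player wins the remaining `n` rounds after the history
given by variable `n`. -/
def game : ℕ → Bool → AForm
  | 0, _ => .eq (table 3 (var 0) zero) one
  | n + 1, b => relQuant b n (extendsHistory n) (game n (!b))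

/-- `φ` holds and the existential player loses the game with `n` rounds. -/
def diagonal (φ : AForm) (n : ℕ) : AForm :=
  φ.flatten.conj (.exN n (.conj (.eq (var n) zero) (.neg (game n true))))

variable {M : History → Prop} {F : ℕ → ℕ → ℕ} {G : ℕ → ℕ}

theorem sat_extendsHistory (hG : ∀ k a b, G (slot k a b) = gameTables M F k a b) (n m : ℕ)
    (v : ℕ → ℕ) : ((extendsHistory n).sat (Function.update v n m) fun _ => G) ↔
      (Encodable.encode (history m).tail = v (n + 1) ∧ m ≠ v (n + 1)) ∧
        ∀ i, ((history m).headD []).getD i default ∈ {r | G r.1 = r.2.2} := by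
  have ne₁ : n + 1 ≠ n := n.succ_ne_self
  have ne₂ : n + 2 ≠ n := by omega
  simp only [extendsHistory, sat_conj, sat, ATerm.eval, ATerm.eval_table, hG, gameTables,
    Function.update_self, Function.update_of_ne ne₁, Function.update_of_ne ne₂.symm,
    Set.mem_ofPred_eq, ne_eq]

theorem setOf_extendsHistory (hG : ∀ k a b, G (slot k a b) = gameTables M F k a b) (n : ℕ)
    (v : ℕ → ℕ) : {m | (extendsHistory n).sat (Function.update v n m) fun _ => G} =
      (fun w => Encodable.encode (w :: history (v (n + 1)))) ''
        {w | ∀ i, w.getD i default ∈ {r | G r.1 = r.2.2}} := by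
  ext m
  have code_history (h : ℕ) : Encodable.encode (history h) = h := Denumerable.encode_ofNat h
  rw [Set.mem_ofPred_eq, sat_extendsHistory hG]
  constructor
  · rintro ⟨⟨tail_eq, ne⟩, legal⟩
    have extends_tail : history (v (n + 1)) = (history m).tail := by rw [← tail_eq, history_encode]
    refine ⟨(history m).headD [], legal, ?_⟩
    cases hm : history m with
    | nil => exact absurd (by rw [← code_history m, ← tail_eq, hm, List.tail_nil]) ne
    | cons w H =>
      rw [hm] at extends_tail
      exact (congrArg (fun K => Encodable.encode (w :: K)) extends_tail).trans
        (hm ▸ code_history m)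
  · rintro ⟨w, legal, rfl⟩
    rw [history_encode]
    refine ⟨⟨code_history _, fun h => ?_⟩, legal⟩
    exact List.cons_ne_self w _ (Encodable.encode_injective (h.trans (code_history _).symm))

theorem sat_game (hG : ∀ k a b, G (slot k a b) = gameTables M F k a b) (n : ℕ) (b : Bool)
    (v : ℕ → ℕ) : ((game n b).sat v fun _ => G) ↔
      QuantGame {r | G r.1 = r.2.2} n b fun L => M ((history (v n)).reverse ++ L) := by
  induction n generalizing b v with
  | zero =>
    simp only [game, QuantGame, sat, ATerm.eval_table, ATerm.eval, hG, gameTables,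
      ite_eq_left_iff, zero_ne_one, imp_false, not_not, List.append_nil]
  | succ n ih =>
    simp only [game, sat_relQuant, setOf_extendsHistory hG, BoundedQuant.image_iff, ih, QuantGame,
      Function.update_self, history_encode, List.reverse_cons, List.append_assoc,
      List.singleton_append]

theorem sat_diagonal (hG : ∀ k a b, G (slot k a b) = gameTables M F k a b) (φ : AForm) (n : ℕ)
    (v : ℕ → ℕ) : ((φ.diagonal n).sat v fun _ => G) ↔
      φ.sat v F ∧ ¬ QuantGame {r | G r.1 = r.2.2} n true M := by
  have tables_eq : (fun f a => G (slot (f + 4) a 0)) = F := funext₂ fun f a => hG (f + 4) a 0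
  have history_zero : history 0 = [] := history_encode []
  simp only [diagonal, sat_conj, sat_flatten, tables_eq, sat, ATerm.eval, sat_game hG,
    Function.update_self, exists_eq_left, history_zero, List.reverse_nil, List.nil_append]

end AForm

/-- The trace coding the row described by `(x, y, z)`. -/
def rowTrace (r : ℕ × ℕ × ℕ) : Trace ℕ :=
  fun j => {p | j = tableEntry (fun _ => r.2.2) r.1 r.2.1 p}

theorem encodesTable_image_rowTrace (G : ℕ → ℕ) :
    EncodesTable (rowTrace '' {r | G r.1 = r.2.2}) G := by
  have isRow {r : ℕ × ℕ × ℕ} (hr : G r.1 = r.2.2) : IsRow G r.1 r.2.1 (rowTrace r) := by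
    intro p hp j
    have entry_eq : tableEntry (fun _ => r.2.2) r.1 r.2.1 p = tableEntry G r.1 r.2.1 p := by
      interval_cases p <;> first | rfl | exact hr.symm
    exact entry_eq ▸ Iff.rfl
  refine ⟨?_, fun x y => ⟨_, ⟨(x, y, G x), rfl, rfl⟩, isRow rfl⟩⟩
  rintro _ ⟨r, hr, rfl⟩
  exact ⟨r.1, r.2.1, isRow hr⟩

theorem AForm.exists_sat_diagonal_iff_not_models {n : ℕ} {χ : HFormula ℕ}
    (hχ : SigPrefix n χ.prefixList) {φ : AForm} {v : ℕ → ℕ} {F : ℕ → ℕ → ℕ} (hφ : φ.sat v F) :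
    ∃ T G, EncodesTable T G ∧ (((φ.diagonal n).sat v fun _ => G) ↔ ¬ HModels T χ) := by
  obtain ⟨M, hM⟩ := HFormula.exists_quantGame rowTrace hχ
  obtain ⟨G, hG⟩ := exists_eq_tables (gameTables (M fun _ _ => ∅) F)
  have default_mem : (default : ℕ × ℕ × ℕ) ∈ {r | G r.1 = r.2.2} := by
    have history_zero : history 0 = [] := history_encode []
    have := hG 0 0 0
    rwa [gameTables, history_zero] at this
  exact ⟨_, G, encodesTable_image_rowTrace G, (sat_diagonal hG φ n v).trans <|
    (and_iff_right hφ).trans <| not_congr (hM _ default_mem _).symm⟩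

theorem altPrefix_nil (n : ℕ) (b : Bool) : AltPrefix n b [] := by
  induction n generalizing b with
  | zero => rfl
  | succ n ih => exact ⟨[], [], rfl, List.forall_mem_nil _, ih _⟩

theorem HFormula.codeWith_mem_equivSigmaCodes_of_not_hSatisfiable {n : ℕ} (hn : 0 < n)
    {φ : HFormula ℕ} (hφ : φ.IsSentence) (h : ¬ HSatisfiable φ) :
    φ.codeWith id ∈ EquivSigmaCodes n := by
  obtain ⟨n, rfl⟩ := Nat.exists_eq_add_one.2 hn
  refine ⟨φ, hφ, rfl, .ex 0 (.qf (.neg (.disj (.atom 0 0) (.neg (.atom 0 0))))), ⟨?_, ?_⟩, fun T =>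
    ⟨fun hT => (h ⟨T, hT⟩).elim, fun ⟨_, _, contradictory⟩ => (contradictory (em _)).elim⟩⟩
  · simp only [IsSentence, freeVars, QF.freeVars, Set.union_self, sdiff_self, Set.bot_eq_empty]
  · exact ⟨[true], [], rfl, fun _ => List.mem_singleton.1, altPrefix_nil n _⟩

theorem Sigma11.manyOneRed_compl_equivSigmaCodes {n : ℕ} (hn : 0 < n) {N : Set ℕ}
    (hN : Sigma11 N) : ManyOneRed Nᶜ (EquivSigmaCodes n) := by
  obtain ⟨φ, hφ⟩ := hN
  obtain ⟨S, hS⟩ := (φ.diagonal n).exists_reducesTo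
  refine ⟨fun x => (S x).codeWith id, hS.computable, fun x => ⟨fun hx => ?_, ?_⟩⟩
  · refine HFormula.codeWith_mem_equivSigmaCodes_of_not_hSatisfiable hn (hS.isSentence x) ?_
    rintro ⟨T, hT⟩
    obtain ⟨G, hG⟩ := hS.encodesTable x T hT
    have diagonal := (hS.models_iff x T G hG).1 hT
    exact hx <| (hφ x).2 ⟨_, (AForm.sat_flatten φ _ G).1 (AForm.sat_conj.1 diagonal).1⟩
  · rintro ⟨_, -, hcode, χ, hχ, equiv⟩ hx
    obtain rfl := HFormula.codeWith_injective hcode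
    obtain ⟨F, hF⟩ := (hφ x).1 hx
    obtain ⟨T, G, hG, hdiag⟩ := AForm.exists_sat_diagonal_iff_not_models hχ.2 hF
    exact iff_not_self <| (equiv T).symm.trans <| (hS.models_iff x T G hG).trans hdiag

/-! ### Countable models -/

theorem exists_closed_sequence {α ι : Type*} [Countable ι] [Nonempty ι] (a₀ : α)
    (op : ι → (ℕ → α) → α) {look : ℕ → ℕ → ℕ} (hlook : ∀ w, ∃ m, ∀ x, look w x ≤ m) :
    ∃ t : ℕ → α, t 0 = a₀ ∧ (∀ i ≠ 0, ∃ o s, t i = op o s) ∧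
      ∀ o w, ∃ i ≠ 0, t i = op o fun x => t (look w x) := by
  obtain ⟨o, ho⟩ := exists_surjective_nat ι
  let step (i : ℕ) (t : ∀ j < i, α) : α := if i = 0 then a₀ else
    op (o i.unpair.1) fun x =>
      if h : look i.unpair.2.unpair.1 x < i then t (look i.unpair.2.unpair.1 x) h else a₀
  let t : ℕ → α := Nat.lt_wfRel.wf.fix step
  have t_eq (i : ℕ) : t i = step i fun j _ => t j := Nat.lt_wfRel.wf.fix_eq step i
  refine ⟨t, t_eq 0, fun i hi => ⟨_, _, (t_eq i).trans (if_neg hi)⟩, fun p w => ?_⟩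
  obtain ⟨k, rfl⟩ := ho p
  obtain ⟨m, hm⟩ := hlook w
  let i := Nat.pair k (Nat.pair w (m + 1))
  have m_lt : m < i := (Nat.right_le_pair w (m + 1)).trans (Nat.right_le_pair k _)
  have look_lt (x : ℕ) : look w x < i := (hm x).trans_lt m_lt
  refine ⟨i, (Nat.zero_le m).trans_lt m_lt |>.ne', ?_⟩
  rw [t_eq i]
  simp only [step, i, Nat.unpair_pair, if_neg ((Nat.zero_le m).trans_lt m_lt).ne', look_lt,
    dite_true]

/-- The value of the variable `x` in the finite list of bindings coded by `w`, with default `0`. -/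
def lookupVar (w x : ℕ) : ℕ := ((Denumerable.ofNat (List (ℕ × ℕ)) w).lookup x).getD 0

/-- The code of the list of bindings coded by `w`, extended by the binding of `x` to `i`. -/
def bindVar (w x i : ℕ) : ℕ := Encodable.encode ((x, i) :: Denumerable.ofNat (List (ℕ × ℕ)) w)

theorem lookupVar_zero (x : ℕ) : lookupVar 0 x = 0 := by
  have : Denumerable.ofNat (List (ℕ × ℕ)) 0 = [] := Denumerable.ofNat_encode []
  simp [lookupVar, this]

theorem lookupVar_bindVar_self (w x i : ℕ) : lookupVar (bindVar w x i) x = i := by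
  simp [lookupVar, bindVar]

theorem lookupVar_bindVar_of_ne {x y : ℕ} (h : y ≠ x) (w i : ℕ) :
    lookupVar (bindVar w x i) y = lookupVar w y := by
  simp [lookupVar, bindVar, List.lookup_cons, beq_false_of_ne h]

theorem comp_lookupVar_bindVar {α : Type*} (t : ℕ → α) (w x i : ℕ) :
    t ∘ lookupVar (bindVar w x i) = Function.update (t ∘ lookupVar w) x (t i) := by
  funext y
  by_cases h : y = x
  · subst h
    simp [lookupVar_bindVar_self]
  · simp [lookupVar_bindVar_of_ne h, h]

theorem exists_forall_lookupVar_le (w : ℕ) : ∃ m, ∀ x, lookupVar w x ≤ m := by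
  simp only [lookupVar]
  induction Denumerable.ofNat (List (ℕ × ℕ)) w with
  | nil => exact ⟨0, fun x => le_rfl⟩
  | cons p L ih =>
    obtain ⟨m, hm⟩ := ih
    refine ⟨max p.2 m, fun x => ?_⟩
    rw [List.lookup_cons]
    split
    · exact le_max_left _ _
    · exact (hm x).trans (le_max_right _ _)

namespace BoundedQuant

variable {α : Type*} {S T : Set α} {P : α → Prop}

theorem exists_witness (hT : T.Nonempty) (b : Bool) (P : α → Prop) :
    ∃ t ∈ T, (BoundedQuant b T P ↔ P t) := by
  cases b
  · by_cases h : ∃ t ∈ T, ¬ P t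
    · obtain ⟨t, ht, hP⟩ := h
      exact ⟨t, ht, iff_of_false (fun h => hP (h t ht)) hP⟩
    · push Not at h
      obtain ⟨t, ht⟩ := hT
      exact ⟨t, ht, iff_of_true h (h t ht)⟩
  · by_cases h : ∃ t ∈ T, P t
    · obtain ⟨t, ht, hP⟩ := h
      exact ⟨t, ht, iff_of_true ⟨t, ht, hP⟩ hP⟩
    · obtain ⟨t, ht⟩ := hT
      exact ⟨t, ht, iff_of_false h fun hP => h ⟨t, ht, hP⟩⟩

theorem iff_of_subset {b : Bool} (hST : S ⊆ T) (h : ∃ t ∈ S, (BoundedQuant b T P ↔ P t)) :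
    BoundedQuant b S P ↔ BoundedQuant b T P := by
  obtain ⟨t, ht, h⟩ := h
  cases b
  · exact ⟨fun hS => h.2 (hS t ht), fun hT s hs => hT s (hST hs)⟩
  · exact ⟨fun ⟨s, hs, hP⟩ => ⟨s, hST hs, hP⟩, fun hT => ⟨t, ht, h.1 hT⟩⟩

end BoundedQuant

namespace HFormula

variable {T : Set (Trace ℕ)} {t : ℕ → Trace ℕ}

theorem sat_image_iff_of_witnesses (ht : ∀ i ≠ 0, t i ∈ T)
    (hwit : ∀ b x (φ : HFormula ℕ) w, ∃ i ≠ 0,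
      (BoundedQuant b T (fun s => φ.sat T (Function.update (t ∘ lookupVar w) x s)) ↔
        φ.sat T (Function.update (t ∘ lookupVar w) x (t i)))) (φ : HFormula ℕ) (w : ℕ) :
    φ.sat (t '' {i | i ≠ 0}) (t ∘ lookupVar w) ↔ φ.sat T (t ∘ lookupVar w) := by
  have quantified (b : Bool) (x : ℕ) (φ : HFormula ℕ)
      (ih : ∀ w, φ.sat (t '' {i | i ≠ 0}) (t ∘ lookupVar w) ↔ φ.sat T (t ∘ lookupVar w)) (w : ℕ) :
      (quant b x φ).sat (t '' {i | i ≠ 0}) (t ∘ lookupVar w) ↔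
        (quant b x φ).sat T (t ∘ lookupVar w) := by
    obtain ⟨i, hi, hwit⟩ := hwit b x φ w
    rw [sat_quant, sat_quant, ← BoundedQuant.iff_of_subset (Set.image_subset_iff.2 ht)
      ⟨t i, Set.mem_image_of_mem t hi, hwit⟩]
    refine BoundedQuant.congr (Set.forall_mem_image.2 fun j _ => ?_)
    rw [← comp_lookupVar_bindVar]
    exact ih _
  induction φ generalizing w with
  | ex x φ ih => exact quantified true x φ ih w
  | all x φ ih => exact quantified false x φ ih w
  | qf ψ => rfl

end HFormula

theorem exists_countable_equivalent_model (T : Set (Trace ℕ)) :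
    ∃ (I : Set ℕ) (t : ℕ → Trace ℕ), 0 ∉ I ∧ t 0 = (fun _ => ∅) ∧
      ∀ χ : HFormula ℕ, HModels (t '' I) χ ↔ HModels T χ := by
  obtain rfl | hT := T.eq_empty_or_nonempty
  · exact ⟨∅, fun _ _ => ∅, id, rfl, fun χ => by rw [Set.image_empty]⟩
  have : Countable (HFormula ℕ) := HFormula.codeWith_injective.countable
  choose witness witness_mem sat_witness using fun (o : Bool × ℕ × HFormula ℕ) (As : ℕ → Trace ℕ) =>
    BoundedQuant.exists_witness hT o.1 fun s => o.2.2.sat T (Function.update As o.2.1 s)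
  have : Nonempty (Bool × ℕ × HFormula ℕ) := ⟨(true, 0, .qf (.atom 0 0))⟩
  obtain ⟨t, t_zero, t_mem, t_closed⟩ := exists_closed_sequence (fun _ => ∅) witness
    exists_forall_lookupVar_le
  refine ⟨{i | i ≠ 0}, t, fun h => h rfl, t_zero, fun χ => ?_⟩
  have initial : (t ∘ lookupVar 0) = fun _ _ => ∅ := funext fun x => by
    rw [Function.comp_apply, lookupVar_zero, t_zero]
  rw [HModels, HModels, ← initial]
  refine HFormula.sat_image_iff_of_witnesses (fun i hi => ?_) (fun b x φ w => ?_) χ 0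
  · obtain ⟨o, s, h⟩ := t_mem i hi
    exact h ▸ witness_mem o s
  · obtain ⟨i, hi, h⟩ := t_closed (b, x, φ) w
    exact ⟨i, hi, h ▸ sat_witness (b, x, φ) _⟩

/-! ### Tables of satisfaction relations -/

/-- The data by which an arithmetical formula speaks about HyperLTL: numbers code formulas (`e`,
`f`, `d`) and assignments (`w`) of trace indices to variables, and for every number `d` there is a
countable set of indexed traces. The index `0` stands for the absence of a value, and serves as the
name of the empty trace. -/
structure Tables where
  /-- the pairing function of the coding of formulas -/
  pair : ℕ → ℕ → ℕ
  /-- `look w x` is the index that the assignment `w` gives to the variable `x` -/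
  look : ℕ → ℕ → ℕ
  /-- `upd w x i` is the assignment `w` with the value of `x` replaced by `i` -/
  upd : ℕ → ℕ → ℕ → ℕ
  /-- `bound e w`: `e` codes a quantifier-free formula whose variables have a value in `w` -/
  bound : ℕ → ℕ → Prop
  /-- `alt b e w m`: `e` codes a formula whose free variables have a value in `w` and whose prefix
  consists of at most `m` blocks, the first one of kind `b` -/
  alt : Bool → ℕ → ℕ → ℕ → Prop
  /-- `mem d i`: the trace with index `i` belongs to the set number `d` -/
  mem : ℕ → ℕ → Prop
  /-- `label d i j p`: the trace with index `i` for the set number `d` has `p` at position `j` -/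
  label : ℕ → ℕ → ℕ → ℕ → Prop
  /-- `satQF d e w j`: the quantifier-free formula `e` holds under `w` from position `j` on -/
  satQF : ℕ → ℕ → ℕ → ℕ → Prop
  /-- `satHF d e w`: the formula `e` holds in the set number `d` under `w` -/
  satHF : ℕ → ℕ → ℕ → Prop

namespace Tables

/-- The tables stored in a sequence of unary functions, arguments being combined by `polyPair`. -/
def ofFun (F : ℕ → ℕ → ℕ) : Tables where
  pair a b := F 0 (polyPair a b)
  look w x := F 1 (polyPair w x)
  upd w x i := F 2 (polyPair w (polyPair x i))
  bound e w := F 3 (polyPair e w) = 1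
  alt b e w m := F 4 (polyPair b.toNat (polyPair e (polyPair w m))) = 1
  mem d i := F 5 (polyPair d i) = 1
  label d i j p := F 6 (polyPair d (polyPair i (polyPair j p))) = 1
  satQF d e w j := F 7 (polyPair d (polyPair e (polyPair w j))) = 1
  satHF d e w := F 8 (polyPair d (polyPair e w)) = 1

open scoped Classical in
theorem ofFun_surjective : Function.Surjective ofFun := by
  intro S
  obtain ⟨l, r, h⟩ := exists_leftInverse_polyPair
  let indicator (P : Prop) : ℕ := if P then 1 else 0
  refine ⟨fun k m => match k with
    | 0 => S.pair (l m) (r m)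
    | 1 => S.look (l m) (r m)
    | 2 => S.upd (l m) (l (r m)) (r (r m))
    | 3 => indicator (S.bound (l m) (r m))
    | 4 => indicator (S.alt (l m == 1) (l (r m)) (l (r (r m))) (r (r (r m))))
    | 5 => indicator (S.mem (l m) (r m))
    | 6 => indicator (S.label (l m) (l (r m)) (l (r (r m))) (r (r (r m))))
    | 7 => indicator (S.satQF (l m) (l (r m)) (l (r (r m))) (r (r (r m))))
    | _ => indicator (S.satHF (l m) (l (r m)) (r (r m))), ?_⟩
  have indicator_eq_one (P : Prop) : (indicator P = 1) = P := by simp [indicator]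
  have toNat_beq_one (b : Bool) : (b.toNat == 1) = b := by cases b <;> rfl
  simp only [ofFun, h, indicator_eq_one, toNat_beq_one]

/-- The code of `quant b x φ`, given the code `e` of `φ`. -/
def quantCode (S : Tables) (b : Bool) (x e : ℕ) : ℕ := S.pair (!b).toNat (S.pair x e)

/-- The laws of the tables on assignments and on the syntax of formulas. The relations `bound` and
`alt` need not be the least ones with the stated closure properties. -/
structure SyntaxLaws (S : Tables) : Prop where
  pair_eq a b : S.pair a b = Nat.pair a b
  look_zero x : S.look 0 x = 0
  look_upd_self w x i : S.look (S.upd w x i) x = i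
  look_upd_of_ne w x y i : y ≠ x → S.look (S.upd w x i) y = S.look w y
  bound_atom a w x : S.look w x ≠ 0 → S.bound (S.pair 0 (S.pair a x)) w
  bound_neg e w : S.bound e w → S.bound (S.pair 1 e) w
  bound_disj e f w : S.bound e w → S.bound f w → S.bound (S.pair 2 (S.pair e f)) w
  bound_next e w : S.bound e w → S.bound (S.pair 3 e) w
  bound_untl e f w : S.bound e w → S.bound f w → S.bound (S.pair 4 (S.pair e f)) w
  alt_qf b e w m : S.bound e w → S.alt b (S.pair 2 e) w m
  alt_block b e w m : S.alt (!b) e w m → S.alt b e w (m + 1)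
  alt_quant b e w x m : S.alt b e (S.upd w x 1) (m + 1) → S.alt b (S.quantCode b x e) w (m + 1)

/-- The laws of the tables on the indexed traces and on the satisfaction relations. -/
structure SemanticsLaws (S : Tables) : Prop where
  not_mem_zero d : ¬ S.mem d 0
  not_label_zero d j p : ¬ S.label d 0 j p
  satQF_atom d a w x j : S.satQF d (S.pair 0 (S.pair a x)) w j ↔ S.label d (S.look w x) j a
  satQF_neg d e w j : S.bound e w → (S.satQF d (S.pair 1 e) w j ↔ ¬ S.satQF d e w j)
  satQF_disj d e f w j : S.bound e w → S.bound f w →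
    (S.satQF d (S.pair 2 (S.pair e f)) w j ↔ S.satQF d e w j ∨ S.satQF d f w j)
  satQF_next d e w j : S.bound e w → (S.satQF d (S.pair 3 e) w j ↔ S.satQF d e w (j + 1))
  satQF_untl d e f w j : S.bound e w → S.bound f w → (S.satQF d (S.pair 4 (S.pair e f)) w j ↔
    ∃ k, S.satQF d f w (j + k) ∧ ∀ l < k, S.satQF d e w (j + l))
  satHF_qf d e w : S.bound e w → (S.satHF d (S.pair 2 e) w ↔ S.satQF d e w 0)
  satHF_quant b b' d e w x m : S.alt b' e (S.upd w x 1) m → (S.satHF d (S.quantCode b x e) w ↔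
    BoundedQuant b {i | S.mem d i} fun i => S.satHF d e (S.upd w x i))

/-- The set number `d` tells `c` apart from `d`, whenever `c` codes a sentence and `d` codes a
Σₙ-sentence. -/
def Separates (S : Tables) (n c : ℕ) : Prop :=
  ∀ m d, S.alt true c 0 m → S.alt true d 0 n → ¬ (S.satHF d c 0 ↔ S.satHF d d 0)

/-- The trace with index `i` for the set number `d`. -/
def trace (S : Tables) (d i : ℕ) : Trace ℕ := fun j => {p | S.label d i j p}

/-- The trace assignment coded by `w`. -/
def assignment (S : Tables) (d w : ℕ) : ℕ → Trace ℕ := fun x => S.trace d (S.look w x)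

/-- The set of traces number `d`. -/
def traces (S : Tables) (d : ℕ) : Set (Trace ℕ) := S.trace d '' {i | S.mem d i}

variable {S : Tables}

namespace SyntaxLaws

theorem bound_codeWith (h : S.SyntaxLaws) {ψ : QF ℕ} {w : ℕ}
    (hw : ∀ x ∈ ψ.freeVars, S.look w x ≠ 0) : S.bound (ψ.codeWith id) w := by
  induction ψ <;> simp only [QF.codeWith, ← h.pair_eq]
  case atom a x => exact h.bound_atom a w x (hw x rfl)
  case neg ih => exact h.bound_neg _ w (ih hw)
  case disj ihψ ihχ =>
    exact h.bound_disj _ _ w (ihψ fun x hx => hw x (.inl hx)) (ihχ fun x hx => hw x (.inr hx))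
  case next ih => exact h.bound_next _ w (ih hw)
  case untl ihψ ihχ =>
    exact h.bound_untl _ _ w (ihψ fun x hx => hw x (.inl hx)) (ihχ fun x hx => hw x (.inr hx))

theorem quantCode_codeWith (h : S.SyntaxLaws) (b : Bool) (x : ℕ) (φ : HFormula ℕ) :
    S.quantCode b x (φ.codeWith id) = (HFormula.quant b x φ).codeWith id := by
  cases b <;> simp only [quantCode, h.pair_eq] <;> rfl

theorem look_upd_ne_zero (h : S.SyntaxLaws) {b : Bool} {x w i : ℕ} {φ : HFormula ℕ} (hi : i ≠ 0)
    (hw : ∀ y ∈ (HFormula.quant b x φ).freeVars, S.look w y ≠ 0) :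
    ∀ y ∈ φ.freeVars, S.look (S.upd w x i) y ≠ 0 := by
  intro y hy
  rw [HFormula.freeVars_quant] at hw
  by_cases hyx : y = x
  · rwa [hyx, h.look_upd_self]
  · rw [h.look_upd_of_ne w x y i hyx]
    exact hw y ⟨hy, hyx⟩

theorem alt_codeWith (h : S.SyntaxLaws) {m : ℕ} {b : Bool} {φ : HFormula ℕ} {w : ℕ}
    (hφ : AltPrefix m b φ.prefixList) (hw : ∀ x ∈ φ.freeVars, S.look w x ≠ 0) :
    S.alt b (φ.codeWith id) w m := by
  induction m generalizing b φ w with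
  | zero =>
    cases φ with
    | qf ψ =>
      rw [HFormula.codeWith, ← h.pair_eq]
      exact h.alt_qf b _ w 0 (h.bound_codeWith hw)
    | ex | all => cases hφ
  | succ m ih =>
    obtain ⟨l₁, l₂, hl, hb, h₂⟩ := hφ
    induction l₁ generalizing φ w with
    | nil => exact h.alt_block b _ w m (ih (by rwa [hl]) hw)
    | cons c l₁ ihl =>
      obtain rfl : c = b := hb c List.mem_cons_self
      obtain ⟨x, φ, rfl, hφ⟩ := HFormula.exists_quant_of_prefixList_eq_cons hl
      rw [← h.quantCode_codeWith]
      exact h.alt_quant c _ w x m (ihl (h.look_upd_ne_zero one_ne_zero hw) hφ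
        fun d hd => hb d (List.mem_cons_of_mem _ hd))

theorem assignment_upd (h : S.SyntaxLaws) (d w x i : ℕ) :
    S.assignment d (S.upd w x i) = Function.update (S.assignment d w) x (S.trace d i) := by
  funext y
  by_cases hy : y = x
  · rw [hy, Function.update_self, assignment, h.look_upd_self]
  · rw [Function.update_of_ne hy, assignment, h.look_upd_of_ne w x y i hy, assignment]

end SyntaxLaws

end Tables

theorem exists_altPrefix (b : Bool) (l : List Bool) : ∃ m, AltPrefix m b l := by
  induction l generalizing b with
  | nil => exact ⟨0, rfl⟩
  | cons c l ih =>
    obtain ⟨m, hm⟩ := ih (!c)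
    have block : AltPrefix (m + 1) c (c :: l) := ⟨[c], l, rfl, by simp, hm⟩
    by_cases hbc : c = b
    · exact ⟨m + 1, hbc ▸ block⟩
    · exact ⟨m + 2, [], c :: l, rfl, by simp, Bool.eq_not.2 hbc ▸ block⟩

namespace Tables

variable {S : Tables}

namespace SemanticsLaws

theorem satQF_codeWith_iff (hS : S.SyntaxLaws) (h : S.SemanticsLaws) {ψ : QF ℕ} {d w : ℕ}
    (hw : ∀ x ∈ ψ.freeVars, S.look w x ≠ 0) (j : ℕ) :
    S.satQF d (ψ.codeWith id) w j ↔ ψ.sat (shiftAsg (S.assignment d w) j) := by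
  induction ψ generalizing j <;> simp only [QF.codeWith, QF.sat, shiftAsg_shiftAsg, ← hS.pair_eq]
  case atom a x =>
    rw [shiftAsg_apply, Nat.zero_add]
    exact h.satQF_atom d a w x j
  case neg ψ ih =>
    exact (h.satQF_neg d (ψ.codeWith id) w j (hS.bound_codeWith hw)).trans (not_congr (ih hw j))
  case disj ihψ ihχ =>
    have hψ x hx := hw x (.inl hx)
    have hχ x hx := hw x (.inr hx)
    exact (h.satQF_disj d _ _ w j (hS.bound_codeWith hψ) (hS.bound_codeWith hχ)).trans
      (or_congr (ihψ hψ j) (ihχ hχ j))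
  case next ψ ih =>
    exact (h.satQF_next d (ψ.codeWith id) w j (hS.bound_codeWith hw)).trans (ih hw (j + 1))
  case untl ihψ ihχ =>
    have hψ x hx := hw x (.inl hx)
    have hχ x hx := hw x (.inr hx)
    exact (h.satQF_untl d _ _ w j (hS.bound_codeWith hψ) (hS.bound_codeWith hχ)).trans
      (exists_congr fun k => and_congr (ihχ hχ _) (forall₂_congr fun l _ => ihψ hψ _))

theorem satHF_codeWith_iff (hS : S.SyntaxLaws) (h : S.SemanticsLaws) {φ : HFormula ℕ} {d w : ℕ}
    (hw : ∀ x ∈ φ.freeVars, S.look w x ≠ 0) :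
    S.satHF d (φ.codeWith id) w ↔ φ.sat (S.traces d) (S.assignment d w) := by
  have quantified (b : Bool) (x : ℕ) (φ : HFormula ℕ)
      (ih : ∀ {w}, (∀ y ∈ φ.freeVars, S.look w y ≠ 0) →
        (S.satHF d (φ.codeWith id) w ↔ φ.sat (S.traces d) (S.assignment d w))) {w : ℕ}
      (hw : ∀ y ∈ (HFormula.quant b x φ).freeVars, S.look w y ≠ 0) :
      S.satHF d ((HFormula.quant b x φ).codeWith id) w ↔
        (HFormula.quant b x φ).sat (S.traces d) (S.assignment d w) := by
    obtain ⟨m, hm⟩ := exists_altPrefix true φ.prefixList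
    rw [← hS.quantCode_codeWith, h.satHF_quant b true d _ w x m
      (hS.alt_codeWith hm (hS.look_upd_ne_zero one_ne_zero hw)), HFormula.sat_quant, traces,
      BoundedQuant.image_iff]
    refine BoundedQuant.congr fun i hi => ?_
    have hi₀ : i ≠ 0 := fun h₀ => h.not_mem_zero d (h₀ ▸ hi)
    rw [ih (hS.look_upd_ne_zero hi₀ hw), hS.assignment_upd, traces]
  induction φ generalizing w with
  | ex x φ ih => exact quantified true x φ ih hw
  | all x φ ih => exact quantified false x φ ih hw
  | qf ψ =>
    rw [HFormula.codeWith, ← hS.pair_eq]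
    exact (h.satHF_qf d _ w (hS.bound_codeWith hw)).trans (h.satQF_codeWith_iff hS hw 0)

theorem assignment_zero (hS : S.SyntaxLaws) (h : S.SemanticsLaws) (d : ℕ) :
    S.assignment d 0 = fun _ _ => ∅ := by
  funext x j
  rw [assignment, hS.look_zero]
  exact Set.eq_empty_of_forall_notMem (h.not_label_zero d j)

theorem notMem_equivSigmaCodes (hS : S.SyntaxLaws) (h : S.SemanticsLaws) {n c : ℕ}
    (hc : S.Separates n c) : c ∉ EquivSigmaCodes n := by
  rintro ⟨φ, hφ, rfl, ψ, ⟨hψ, hψn⟩, hφψ⟩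
  have closed {χ : HFormula ℕ} (hχ : χ.IsSentence) : ∀ x ∈ χ.freeVars, S.look 0 x ≠ 0 :=
    fun x hx => by rw [hχ] at hx; exact hx.elim
  have models_iff (d : ℕ) {χ : HFormula ℕ} (hχ : χ.IsSentence) :
      S.satHF d (χ.codeWith id) 0 ↔ HModels (S.traces d) χ := by
    rw [h.satHF_codeWith_iff hS (closed hχ), h.assignment_zero hS, HModels]
  obtain ⟨m, hm⟩ := exists_altPrefix true φ.prefixList
  refine hc m (ψ.codeWith id) (hS.alt_codeWith hm (closed hφ)) (hS.alt_codeWith hψn (closed hψ)) ?_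
  rw [models_iff _ hφ, models_iff _ hψ]
  exact hφψ _

end SemanticsLaws

end Tables

namespace Tables

/-- The intended tables, where the traces indexed for the set number `d` are `t d` and the set
itself consists of those with an index in `I d`. -/
def standard (t : ℕ → ℕ → Trace ℕ) (I : ℕ → Set ℕ) : Tables where
  pair := Nat.pair
  look := lookupVar
  upd := bindVar
  bound e w := ∃ ψ : QF ℕ, ψ.codeWith id = e ∧ ∀ x ∈ ψ.freeVars, lookupVar w x ≠ 0
  alt b e w m := ∃ φ : HFormula ℕ, φ.codeWith id = e ∧ AltPrefix m b φ.prefixList ∧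
    ∀ x ∈ φ.freeVars, lookupVar w x ≠ 0
  mem d i := i ∈ I d
  label d i j p := p ∈ t d i j
  satQF d e w j := ∃ ψ : QF ℕ, ψ.codeWith id = e ∧ ψ.sat (shiftAsg (t d ∘ lookupVar w) j)
  satHF d e w := ∃ φ : HFormula ℕ, φ.codeWith id = e ∧ φ.sat (t d '' I d) (t d ∘ lookupVar w)

variable (t : ℕ → ℕ → Trace ℕ) (I : ℕ → Set ℕ)

theorem quantCode_standard (b : Bool) (x : ℕ) (φ : HFormula ℕ) :
    (standard t I).quantCode b x (φ.codeWith id) = (HFormula.quant b x φ).codeWith id := by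
  cases b <;> rfl

theorem satQF_standard (d : ℕ) (ψ : QF ℕ) (w j : ℕ) :
    (standard t I).satQF d (ψ.codeWith id) w j ↔ ψ.sat (shiftAsg (t d ∘ lookupVar w) j) := by
  simp only [standard, QF.codeWith_injective.eq_iff, exists_eq_left]

theorem satHF_standard (d : ℕ) (φ : HFormula ℕ) (w : ℕ) :
    (standard t I).satHF d (φ.codeWith id) w ↔ φ.sat (t d '' I d) (t d ∘ lookupVar w) := by
  simp only [standard, HFormula.codeWith_injective.eq_iff, exists_eq_left]

theorem syntaxLaws_standard : (standard t I).SyntaxLaws where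
  pair_eq _ _ := rfl
  look_zero := lookupVar_zero
  look_upd_self := lookupVar_bindVar_self
  look_upd_of_ne w _ _ i h := lookupVar_bindVar_of_ne h w i
  bound_atom a _ x h := ⟨.atom a x, rfl, fun _ hy => hy ▸ h⟩
  bound_neg := by
    rintro _ w ⟨ψ, rfl, hψ⟩
    exact ⟨.neg ψ, rfl, hψ⟩
  bound_disj := by
    rintro _ _ w ⟨ψ, rfl, hψ⟩ ⟨χ, rfl, hχ⟩
    exact ⟨.disj ψ χ, rfl, fun x hx => hx.elim (hψ x) (hχ x)⟩
  bound_next := by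
    rintro _ w ⟨ψ, rfl, hψ⟩
    exact ⟨.next ψ, rfl, hψ⟩
  bound_untl := by
    rintro _ _ w ⟨ψ, rfl, hψ⟩ ⟨χ, rfl, hχ⟩
    exact ⟨.untl ψ χ, rfl, fun x hx => hx.elim (hψ x) (hχ x)⟩
  alt_qf := by
    rintro b _ w m ⟨ψ, rfl, hψ⟩
    exact ⟨.qf ψ, rfl, altPrefix_nil m b, hψ⟩
  alt_block := by
    rintro b _ w m ⟨φ, rfl, hφ, hw⟩
    exact ⟨φ, rfl, ⟨[], _, rfl, List.forall_mem_nil _, hφ⟩, hw⟩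
  alt_quant := by
    rintro b _ w x m ⟨φ, rfl, ⟨l₁, l₂, hl, hb, h₂⟩, hw⟩
    refine ⟨.quant b x φ, (quantCode_standard t I b x φ).symm,
      ⟨b :: l₁, l₂, ?_, List.forall_mem_cons.2 ⟨rfl, hb⟩, h₂⟩, fun y hy => ?_⟩
    · rw [List.cons_append, ← hl]
      cases b <;> rfl
    · rw [HFormula.freeVars_quant] at hy
      exact lookupVar_bindVar_of_ne hy.2 w 1 ▸ hw y hy.1

theorem semanticsLaws_standard (ht : ∀ d, t d 0 = fun _ => ∅) (hI : ∀ d, 0 ∉ I d) :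
    (standard t I).SemanticsLaws where
  not_mem_zero := hI
  not_label_zero d j p := by
    simp only [standard, ht, Set.mem_empty_iff_false, not_false_eq_true]
  satQF_atom d a w x j := by
    refine (satQF_standard t I d (.atom a x) w j).trans ?_
    rw [QF.sat, shiftAsg_apply, Nat.zero_add]
    rfl
  satQF_neg := by
    rintro d _ w j ⟨ψ, rfl, -⟩
    exact (satQF_standard t I d (.neg ψ) w j).trans (not_congr (satQF_standard t I d ψ w j).symm)
  satQF_disj := by
    rintro d _ _ w j ⟨ψ, rfl, -⟩ ⟨χ, rfl, -⟩
    exact (satQF_standard t I d (.disj ψ χ) w j).trans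
      (or_congr (satQF_standard t I d ψ w j).symm (satQF_standard t I d χ w j).symm)
  satQF_next := by
    rintro d _ w j ⟨ψ, rfl, -⟩
    refine (satQF_standard t I d (.next ψ) w j).trans ?_
    rw [satQF_standard, QF.sat, shiftAsg_shiftAsg]
  satQF_untl := by
    rintro d _ _ w j ⟨ψ, rfl, -⟩ ⟨χ, rfl, -⟩
    refine (satQF_standard t I d (.untl ψ χ) w j).trans ?_
    simp only [satQF_standard, QF.sat, shiftAsg_shiftAsg]
  satHF_qf := by
    rintro d _ w ⟨ψ, rfl, -⟩
    exact (satHF_standard t I d (.qf ψ) w).trans (satQF_standard t I d ψ w 0).symm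
  satHF_quant := by
    rintro b b' d _ w x m ⟨φ, rfl, -⟩
    rw [quantCode_standard, satHF_standard, HFormula.sat_quant, BoundedQuant.image_iff]
    refine BoundedQuant.congr fun i _ => ?_
    rw [← comp_lookupVar_bindVar, ← satHF_standard]
    rfl

end Tables

theorem exists_separating_sets {n c : ℕ} (hc : c ∉ EquivSigmaCodes n) (d : ℕ) :
    ∃ T : Set (Trace ℕ), ∀ φ ψ : HFormula ℕ, φ.codeWith id = c → φ.IsSentence →
      ψ.codeWith id = d → IsSigmaSentence n ψ → ¬ (HModels T φ ↔ HModels T ψ) := by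
  by_contra! h
  obtain ⟨φ, ψ, rfl, hφ, rfl, hψ, -⟩ := h ∅
  refine hc ⟨φ, hφ, rfl, ψ, hψ, fun T => ?_⟩
  obtain ⟨φ', ψ', hφ', -, hψ', -, hT⟩ := h T
  rwa [HFormula.codeWith_injective hφ', HFormula.codeWith_injective hψ'] at hT

theorem Tables.exists_separates {n c : ℕ} (hc : c ∉ EquivSigmaCodes n) :
    ∃ S : Tables, S.SyntaxLaws ∧ S.SemanticsLaws ∧ S.Separates n c := by
  choose T hT using exists_separating_sets hc
  choose I t hI ht models_iff using fun d => exists_countable_equivalent_model (T d)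
  refine ⟨standard t I, syntaxLaws_standard t I, semanticsLaws_standard t I ht hI, ?_⟩
  rintro m _ ⟨φ, rfl, -, hφ⟩ ⟨ψ, rfl, hψn, hψ⟩
  have isSentence {χ : HFormula ℕ} (hχ : ∀ x ∈ χ.freeVars, lookupVar 0 x ≠ 0) : χ.IsSentence :=
    Set.eq_empty_of_forall_notMem fun x hx => hχ x hx (lookupVar_zero x)
  have initial (d : ℕ) : t d ∘ lookupVar 0 = fun _ _ => ∅ := funext fun x => by
    rw [Function.comp_apply, lookupVar_zero, ht]
  rw [satHF_standard, satHF_standard, initial, ← HModels, ← HModels, models_iff, models_iff]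
  exact hT _ φ ψ rfl (isSentence hφ) rfl ⟨isSentence hψ, hψn⟩

/-! ### Arithmetical definition of the tables -/

namespace ATerm

/-- The term for `Tables.pair`. -/
def pair (s t : ATerm) : ATerm := .app 0 (s.polyPair t)

/-- The term for `Tables.look`. -/
def look (w x : ATerm) : ATerm := .app 1 (w.polyPair x)

/-- The term for `Tables.upd`. -/
def upd (w x i : ATerm) : ATerm := .app 2 (w.polyPair (x.polyPair i))

/-- The term for `Tables.quantCode`. -/
def quantCode (b : Bool) (x e : ATerm) : ATerm := pair (numeral (!b).toNat) (pair x e)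

end ATerm

namespace AForm

/-- The formula for `Tables.bound`. -/
def bound (e w : ATerm) : AForm := .eq (.app 3 (e.polyPair w)) .one

/-- The formula for `Tables.alt`. -/
def alt (b : Bool) (e w m : ATerm) : AForm :=
  .eq (.app 4 ((ATerm.numeral b.toNat).polyPair (e.polyPair (w.polyPair m)))) .one

/-- The formula for `Tables.mem`. -/
def mem (d i : ATerm) : AForm := .eq (.app 5 (d.polyPair i)) .one

/-- The formula for `Tables.label`. -/
def label (d i j p : ATerm) : AForm :=
  .eq (.app 6 (d.polyPair (i.polyPair (j.polyPair p)))) .one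

/-- The formula for `Tables.satQF`. -/
def satQF (d e w j : ATerm) : AForm :=
  .eq (.app 7 (d.polyPair (e.polyPair (w.polyPair j)))) .one

/-- The formula for `Tables.satHF`. -/
def satHF (d e w : ATerm) : AForm := .eq (.app 8 (d.polyPair (e.polyPair w))) .one

/-- Equivalence, as the usual abbreviation. -/
def iff (φ ψ : AForm) : AForm := (φ.imp ψ).conj (ψ.imp φ)

/-- Universal quantification over the variable `x`, written with a binder. -/
def all (x : ℕ) (φ : ATerm → AForm) : AForm := .allN x (φ (.var x))

/-- Universal quantification over a truth value. -/
def allBool (φ : Bool → AForm) : AForm := (φ false).conj (φ true)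

variable {v : ℕ → ℕ} {F : ℕ → ℕ → ℕ}

theorem sat_iff {φ ψ : AForm} : (φ.iff ψ).sat v F ↔ (φ.sat v F ↔ ψ.sat v F) := by
  rw [iff, sat_conj, sat_imp, sat_imp]
  exact iff_def.symm

theorem sat_allBool {φ : Bool → AForm} : (allBool φ).sat v F ↔ ∀ b, (φ b).sat v F := by
  rw [allBool, sat_conj, Bool.forall_bool]

/-- The formula for `Tables.SyntaxLaws`. -/
def syntaxLaws : AForm :=
  .conj (.all 1 fun a => .all 2 fun b =>
    .conj (.imp (.lt a b) (.eq (.pair a b) (.add (.mul b b) a)))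
      (.imp (.neg (.lt a b)) (.eq (.pair a b) (.add (.add (.mul a a) a) b)))) <|
  .conj (.all 1 fun x => .eq (.look .zero x) .zero) <|
  .conj (.all 1 fun w => .all 2 fun x => .all 3 fun i => .eq (.look (.upd w x i) x) i) <|
  .conj (.all 1 fun w => .all 2 fun x => .all 3 fun y => .all 4 fun i =>
    .imp (.neg (.eq y x)) (.eq (.look (.upd w x i) y) (.look w y))) <|
  .conj (.all 1 fun a => .all 2 fun w => .all 3 fun x =>
    .imp (.neg (.eq (.look w x) .zero)) (.bound (.pair (.numeral 0) (.pair a x)) w)) <|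
  .conj (.all 1 fun e => .all 2 fun w => .imp (.bound e w) (.bound (.pair (.numeral 1) e) w)) <|
  .conj (.all 1 fun e => .all 2 fun f => .all 3 fun w => .imp (.bound e w)
    (.imp (.bound f w) (.bound (.pair (.numeral 2) (.pair e f)) w))) <|
  .conj (.all 1 fun e => .all 2 fun w => .imp (.bound e w) (.bound (.pair (.numeral 3) e) w)) <|
  .conj (.all 1 fun e => .all 2 fun f => .all 3 fun w => .imp (.bound e w)
    (.imp (.bound f w) (.bound (.pair (.numeral 4) (.pair e f)) w))) <|
  .conj (.allBool fun b => .all 1 fun e => .all 2 fun w => .all 3 fun m =>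
    .imp (.bound e w) (.alt b (.pair (.numeral 2) e) w m)) <|
  .conj (.allBool fun b => .all 1 fun e => .all 2 fun w => .all 3 fun m =>
    .imp (.alt (!b) e w m) (.alt b e w (.add m .one))) <|
  .allBool fun b => .all 1 fun e => .all 2 fun w => .all 3 fun x => .all 4 fun m =>
    .imp (.alt b e (.upd w x .one) (.add m .one)) (.alt b (.quantCode b x e) w (.add m .one))

/-- The formula for `Tables.SemanticsLaws`. -/
def semanticsLaws : AForm :=
  .conj (.all 1 fun d => .neg (.mem d .zero)) <|
  .conj (.all 1 fun d => .all 2 fun j => .all 3 fun p => .neg (.label d .zero j p)) <|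
  .conj (.all 1 fun d => .all 2 fun a => .all 3 fun w => .all 4 fun x => .all 5 fun j =>
    .iff (.satQF d (.pair (.numeral 0) (.pair a x)) w j) (.label d (.look w x) j a)) <|
  .conj (.all 1 fun d => .all 2 fun e => .all 3 fun w => .all 4 fun j => .imp (.bound e w)
    (.iff (.satQF d (.pair (.numeral 1) e) w j) (.neg (.satQF d e w j)))) <|
  .conj (.all 1 fun d => .all 2 fun e => .all 3 fun f => .all 4 fun w => .all 5 fun j =>
    .imp (.bound e w) (.imp (.bound f w)
      (.iff (.satQF d (.pair (.numeral 2) (.pair e f)) w j)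
        (.disj (.satQF d e w j) (.satQF d f w j))))) <|
  .conj (.all 1 fun d => .all 2 fun e => .all 3 fun w => .all 4 fun j => .imp (.bound e w)
    (.iff (.satQF d (.pair (.numeral 3) e) w j) (.satQF d e w (.add j .one)))) <|
  .conj (.all 1 fun d => .all 2 fun e => .all 3 fun f => .all 4 fun w => .all 5 fun j =>
    .imp (.bound e w) (.imp (.bound f w)
      (.iff (.satQF d (.pair (.numeral 4) (.pair e f)) w j)
        (.exN 6 (.conj (.satQF d f w (.add j (.var 6)))
          (.all 7 fun l => .imp (.lt l (.var 6)) (.satQF d e w (.add j l)))))))) <|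
  .conj (.all 1 fun d => .all 2 fun e => .all 3 fun w => .imp (.bound e w)
    (.iff (.satHF d (.pair (.numeral 2) e) w) (.satQF d e w .zero))) <|
  .allBool fun b => .allBool fun b' =>
    .all 1 fun d => .all 2 fun e => .all 3 fun w => .all 4 fun x => .all 5 fun m =>
      .imp (.alt b' e (.upd w x .one) m) (.iff (.satHF d (.quantCode b x e) w)
        (.relQuant b 6 (.mem d (.var 6)) (.satHF d e (.upd w x (.var 6)))))

/-- The formula for `Tables.Separates n`, with the variable `0` for the code. -/
def separates (n : ℕ) : AForm :=
  .all 1 fun m => .all 2 fun d =>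
    .imp (.alt true (.var 0) .zero m) (.imp (.alt true d .zero (.numeral n))
      (.neg (.iff (.satHF d (.var 0) .zero) (.satHF d d .zero))))

theorem sat_syntaxLaws : syntaxLaws.sat v F ↔ (Tables.ofFun F).SyntaxLaws := by
  have pair_eq (p a b : ℕ) : (a < b → p = b * b + a) ∧ (¬ a < b → p = a * a + a + b) ↔
      p = Nat.pair a b := by
    rw [Nat.pair]
    split <;> simp_all
  simp only [syntaxLaws, sat_conj, sat_imp, sat_allBool, all, sat, bound, alt, ATerm.eval,
    ATerm.pair, ATerm.look, ATerm.upd, ATerm.quantCode, ATerm.eval_polyPair, ATerm.eval_numeral,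
    Function.update_apply, Nat.reduceEqDiff, reduceIte, pair_eq]
  exact ⟨fun ⟨h₁, h₂, h₃, h₄, h₅, h₆, h₇, h₈, h₉, h₁₀, h₁₁, h₁₂⟩ =>
    ⟨h₁, h₂, h₃, h₄, h₅, h₆, h₇, h₈, h₉, h₁₀, h₁₁, h₁₂⟩, fun h =>
      ⟨h.1, h.2, h.3, h.4, h.5, h.6, h.7, h.8, h.9, h.10, h.11, h.12⟩⟩

theorem sat_semanticsLaws : semanticsLaws.sat v F ↔ (Tables.ofFun F).SemanticsLaws := by
  simp only [semanticsLaws, sat_conj, sat_imp, sat_iff, sat_allBool, sat_relQuant, all, sat, bound,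
    alt, mem, label, satQF, satHF, ATerm.eval, ATerm.pair, ATerm.look, ATerm.upd, ATerm.quantCode,
    ATerm.eval_polyPair, ATerm.eval_numeral, Function.update_apply, Nat.reduceEqDiff, reduceIte]
  exact ⟨fun ⟨h₁, h₂, h₃, h₄, h₅, h₆, h₇, h₈, h₉⟩ => ⟨h₁, h₂, h₃, h₄, h₅, h₆, h₇, h₈, h₉⟩,
    fun h => ⟨h.1, h.2, h.3, h.4, h.5, h.6, h.7, h.8, h.9⟩⟩

theorem sat_separates (n : ℕ) : (separates n).sat v F ↔ (Tables.ofFun F).Separates n (v 0) := by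
  simp only [separates, sat_imp, sat_iff, all, sat, alt, satHF, ATerm.eval, ATerm.eval_polyPair,
    ATerm.eval_numeral, Function.update_apply, Nat.reduceEqDiff, reduceIte]
  rfl

end AForm

theorem sigma11_compl_equivSigmaCodes (n : ℕ) : Sigma11 (EquivSigmaCodes n)ᶜ := by
  refine ⟨AForm.syntaxLaws.conj (AForm.semanticsLaws.conj (AForm.separates n)), fun c => ?_⟩
  simp only [AForm.sat_conj, AForm.sat_syntaxLaws, AForm.sat_semanticsLaws, AForm.sat_separates,
    Set.mem_compl_iff]
  constructor
  · intro hc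
    obtain ⟨S, hS⟩ := Tables.exists_separates hc
    obtain ⟨F, rfl⟩ := Tables.ofFun_surjective S
    exact ⟨F, hS⟩
  · rintro ⟨F, hsyn, hsem, hsep⟩
    exact hsem.notMem_equivSigmaCodes hsyn hsep

/-- **The membership problem for level `n` of the HyperLTL quantifier alternation
hierarchy is Π¹₁-complete** (for each fixed `n > 0`): the set of codes of
sentences equivalent to some Σ_n-sentence is the complement of a Σ¹₁ set, and the
complement of every Σ¹₁ set many-one reduces to it via a total computable
function. -/
theorem membership_level_n_Pi11_complete (n : ℕ) (hn : 0 < n) :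
    Sigma11 (EquivSigmaCodes n)ᶜ ∧
    ∀ N : Set ℕ, Sigma11 N → ManyOneRed Nᶜ (EquivSigmaCodes n) := by
  exact ⟨sigma11_compl_equivSigmaCodes n, fun _ hN => hN.manyOneRed_compl_equivSigmaCodes hn⟩
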